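/- The first Dirichlet biharmonic eigenvalue of the unit square satisfies 1294.933940 ≤ λ₁(1) ≤ 1294.933988. -/

import Mathlib

open MeasureTheory Real Filter

noncomputable section

/-- Directional (partial) derivative of `u : ℝ × ℝ → ℝ` in direction `v`. -/
def pd (v : ℝ × ℝ) (u : ℝ × ℝ → ℝ) : ℝ × ℝ → ℝ := fun p => fderiv ℝ u p v

/-- Second partial derivative `∂²u/∂x²`. -/
def uxx (u : ℝ × ℝ → ℝ) : ℝ × ℝ → ℝ := pd (1, 0) (pd (1, 0) u)

/-- Second partial derivative `∂²u/∂y²`. -/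
def uyy (u : ℝ × ℝ → ℝ) : ℝ × ℝ → ℝ := pd (0, 1) (pd (0, 1) u)

/-- Mixed second partial derivative `∂²u/∂x∂y`. -/
def uxy (u : ℝ × ℝ → ℝ) : ℝ × ℝ → ℝ := pd (0, 1) (pd (1, 0) u)

/-- The Laplacian `Δu = u_xx + u_yy`. -/
def lap (u : ℝ × ℝ → ℝ) : ℝ × ℝ → ℝ := fun p => uxx u p + uyy u p

/-- The open rectangle `R_a = (0,a) × (0,1/a)` of unit area. -/
def Rect (a : ℝ) : Set (ℝ × ℝ) := Set.Ioo 0 a ×ˢ Set.Ioo 0 (1 / a)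

/-- Admissible test functions: smooth, compactly supported inside `Ω`. -/
def Adm (Ω : Set (ℝ × ℝ)) (u : ℝ × ℝ → ℝ) : Prop :=
  ContDiff ℝ (⊤ : ℕ∞) u ∧ HasCompactSupport u ∧ tsupport u ⊆ Ω

/-- First Dirichlet eigenvalue of the biharmonic operator on `R_a`,
characterized variationally as the infimum of the Rayleigh quotient. -/
def lam1 (a : ℝ) : ℝ :=
  sInf { μ | ∃ u : ℝ × ℝ → ℝ, Adm (Rect a) u ∧ u ≠ 0 ∧
    μ = (∫ p, (lap u p) ^ 2) / (∫ p, (u p) ^ 2) }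

/-- **Second-order Wirtinger inequality** for periodic functions on the unit interval. -/
theorem wirtinger_second_order {f f' f'' : ℝ → ℝ} (hf : ∀ x, HasDerivAt f (f' x) x)
    (hf' : ∀ x, HasDerivAt f' (f'' x) x) (hc : Continuous f'') (h0 : f 0 = f 1)
    (h0' : f' 0 = f' 1) :
    16 * π ^ 4 * ((∫ x in (0:ℝ)..1, f x ^ 2) - (∫ x in (0:ℝ)..1, f x) ^ 2) ≤
      ∫ x in (0:ℝ)..1, f'' x ^ 2 := by
  have hcf : Continuous f := continuous_iff_continuousAt.2 fun x => (hf x).continuousAt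
  have hcf' : Continuous f' := continuous_iff_continuousAt.2 fun x => (hf' x).continuousAt
  have parseval : ∀ g : ℝ → ℝ, Continuous g →
      HasSum (fun n : ℤ => ‖fourierCoeffOn (zero_lt_one (α := ℝ)) (fun x => (g x : ℂ)) n‖ ^ 2)
        (∫ x in (0:ℝ)..1, g x ^ 2) := by
    intro g hg
    have hG : Continuous fun x => (g x : ℂ) := by fun_prop
    have hL : MemLp (fun x => (g x : ℂ)) 2 (volume.restrict (Set.Ioc (0:ℝ) 1)) :=
      ((memLp_two_iff_integrable_sq_norm hG.aestronglyMeasurable).2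
        ((by fun_prop : Continuous fun x => ‖(g x : ℂ)‖ ^ 2).integrableOn_Icc.mono_set
          Set.Ioc_subset_Icc_self))
    simpa using hasSum_sq_fourierCoeffOn zero_lt_one hL
  have key : ∀ g g' : ℝ → ℝ, (∀ x, HasDerivAt g (g' x) x) → Continuous g' → g 0 = g 1 →
      ∀ n : ℤ, n ≠ 0 →
      4 * π ^ 2 * n ^ 2 * ‖fourierCoeffOn (zero_lt_one (α := ℝ)) (fun x => (g x : ℂ)) n‖ ^ 2 =
        ‖fourierCoeffOn (zero_lt_one (α := ℝ)) (fun x => (g' x : ℂ)) n‖ ^ 2 := by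
    intro g g' hg hg' hb n hn
    have h := fourierCoeffOn_of_hasDerivAt (zero_lt_one (α := ℝ)) hn
      (fun x _ => (hg x).ofReal_comp)
      ((by fun_prop : Continuous fun x => (g' x : ℂ)).intervalIntegrable 0 1)
    rw [h, hb]
    have hn' : (n : ℝ) ≠ 0 := by exact_mod_cast hn
    simp [mul_pow]
    field_simp
    norm_num
  have hmean : ‖fourierCoeffOn (zero_lt_one (α := ℝ)) (fun x => (f x : ℂ)) 0‖ ^ 2 =
      (∫ x in (0:ℝ)..1, f x) ^ 2 := by
    rw [fourierCoeffOn_eq_integral]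
    simp [intervalIntegral.integral_ofReal]
  have hs := ((parseval f hcf).sub (hasSum_ite_eq 0
    ((∫ x in (0:ℝ)..1, f x) ^ 2))).mul_left (16 * π ^ 4)
  refine hasSum_le (fun n => ?_) hs (parseval f'' hc)
  by_cases hn : n = 0
  · subst hn
    simp only [if_true, hmean, sub_self, mul_zero]
    positivity
  · have h1 := key f f' hf hcf' h0 n hn
    have h2 := key f' f'' hf' hc h0' n hn
    rw [← h2, ← h1, if_neg hn, sub_zero]
    have h3 : (1:ℝ) ≤ (n:ℝ) ^ 2 := by
      have : 1 ≤ n ^ 2 := by have := sq_pos_of_ne_zero hn; omega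
      exact_mod_cast this
    set c := ‖fourierCoeffOn (zero_lt_one (α := ℝ)) (fun x => (f x : ℂ)) n‖ ^ 2
    have hc0 : 0 ≤ c := by positivity
    have h4 : (1:ℝ) ≤ (n:ℝ) ^ 2 * (n:ℝ) ^ 2 := by nlinarith
    calc 16 * π ^ 4 * c = 16 * π ^ 4 * c * 1 := by ring
      _ ≤ 16 * π ^ 4 * c * ((n:ℝ) ^ 2 * (n:ℝ) ^ 2) := by gcongr
      _ = _ := by ring

theorem ContDiff.pd {u : ℝ × ℝ → ℝ} (hu : ContDiff ℝ (⊤ : ℕ∞) u) (v : ℝ × ℝ) :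
    ContDiff ℝ (⊤ : ℕ∞) (pd v u) :=
  (hu.fderiv_right (m := (⊤ : ℕ∞)) (by simp)).clm_apply contDiff_const

theorem ContDiff.continuous_lap {u : ℝ × ℝ → ℝ} (hu : ContDiff ℝ (⊤ : ℕ∞) u) :
    Continuous (lap u) :=
  ((hu.pd _).pd _).continuous.add ((hu.pd _).pd _).continuous

theorem hasDerivAt_pd_fst {u : ℝ × ℝ → ℝ} (hu : ContDiff ℝ (⊤ : ℕ∞) u) (x y : ℝ) :
    HasDerivAt (fun s => u (s, y)) (pd (1, 0) u (x, y)) x := by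
  have h := (hu.differentiable (by simp) (x, y)).hasFDerivAt
  exact h.comp_hasDerivAt x ((hasDerivAt_id x).prodMk (hasDerivAt_const x y))

theorem hasDerivAt_pd_snd {u : ℝ × ℝ → ℝ} (hu : ContDiff ℝ (⊤ : ℕ∞) u) (x y : ℝ) :
    HasDerivAt (fun s => u (x, s)) (pd (0, 1) u (x, y)) y := by
  have h := (hu.differentiable (by simp) (x, y)).hasFDerivAt
  exact h.comp_hasDerivAt y ((hasDerivAt_const y x).prodMk (hasDerivAt_id y))

theorem pd_comm {u : ℝ × ℝ → ℝ} (hu : ContDiff ℝ (⊤ : ℕ∞) u) (v w : ℝ × ℝ) :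
    pd v (pd w u) = pd w (pd v u) := by
  funext p
  have hd : DifferentiableAt ℝ (fderiv ℝ u) p :=
    (hu.fderiv_right (m := (⊤ : ℕ∞)) (by simp)).differentiable (by simp) p
  have h := hu.contDiffAt.isSymmSndFDerivAt (x := p)
    (by simpa using WithTop.coe_le_coe.2 (le_top : (2 : ℕ∞) ≤ ⊤))
  have e : ∀ a b : ℝ × ℝ, pd a (pd b u) p = fderiv ℝ (fderiv ℝ u) p a b := by
    intro a b
    change fderiv ℝ (fun q => fderiv ℝ u q b) p a = _
    simp [fderiv_clm_apply hd (differentiableAt_const b)]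
  rw [e, e]
  exact h v w

theorem pd_add {u w : ℝ × ℝ → ℝ} (hu : ContDiff ℝ (⊤ : ℕ∞) u) (hw : ContDiff ℝ (⊤ : ℕ∞) w)
    (v : ℝ × ℝ) : pd v (fun p => u p + w p) = fun p => pd v u p + pd v w p := by
  funext p
  simp [pd, fderiv_fun_add (hu.differentiable (by simp) p) (hw.differentiable (by simp) p)]

theorem pd_const_mul {u : ℝ × ℝ → ℝ} (hu : ContDiff ℝ (⊤ : ℕ∞) u) (c : ℝ) (v : ℝ × ℝ) :
    pd v (fun p => c * u p) = fun p => c * pd v u p := by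
  funext p
  simp [pd, fderiv_const_mul (hu.differentiable (by simp) p)]

theorem lap_add {u w : ℝ × ℝ → ℝ} (hu : ContDiff ℝ (⊤ : ℕ∞) u) (hw : ContDiff ℝ (⊤ : ℕ∞) w) :
    lap (fun p => u p + w p) = fun p => lap u p + lap w p := by
  funext p
  simp only [lap, uxx, uyy, pd_add hu hw, pd_add (hu.pd _) (hw.pd _)]
  ring

theorem lap_const_mul {u : ℝ × ℝ → ℝ} (hu : ContDiff ℝ (⊤ : ℕ∞) u) (c : ℝ) :
    lap (fun p => c * u p) = fun p => c * lap u p := by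
  funext p
  simp only [lap, uxx, uyy, pd_const_mul hu, pd_const_mul (hu.pd _)]
  ring

/-- Integral over the closed unit square. -/
def sqInt (f : ℝ × ℝ → ℝ) : ℝ := ∫ p in Set.Icc (0:ℝ) 1 ×ˢ Set.Icc (0:ℝ) 1, f p

theorem Continuous.integrableOn_unitSquare {f : ℝ × ℝ → ℝ} (hf : Continuous f) :
    IntegrableOn f (Set.Icc (0:ℝ) 1 ×ˢ Set.Icc (0:ℝ) 1) :=
  hf.continuousOn.integrableOn_compact (isCompact_Icc.prod isCompact_Icc)

theorem sqInt_add {f g : ℝ × ℝ → ℝ} (hf : Continuous f) (hg : Continuous g) :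
    sqInt (fun p => f p + g p) = sqInt f + sqInt g :=
  integral_add hf.integrableOn_unitSquare hg.integrableOn_unitSquare

theorem sqInt_sub {f g : ℝ × ℝ → ℝ} (hf : Continuous f) (hg : Continuous g) :
    sqInt (fun p => f p - g p) = sqInt f - sqInt g :=
  integral_sub hf.integrableOn_unitSquare hg.integrableOn_unitSquare

theorem sqInt_const_mul (c : ℝ) (f : ℝ × ℝ → ℝ) : sqInt (fun p => c * f p) = c * sqInt f :=
  integral_const_mul c f

theorem sqInt_nonneg {f : ℝ × ℝ → ℝ} (hf : ∀ p, 0 ≤ f p) : 0 ≤ sqInt f :=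
  integral_nonneg hf

theorem sqInt_eq_fst {f : ℝ × ℝ → ℝ} (hf : Continuous f) :
    sqInt f = ∫ x in (0:ℝ)..1, ∫ y in (0:ℝ)..1, f (x, y) := by
  rw [sqInt, Measure.volume_eq_prod, setIntegral_prod f hf.integrableOn_unitSquare,
    intervalIntegral.integral_of_le zero_le_one, integral_Icc_eq_integral_Ioc]
  simp_rw [intervalIntegral.integral_of_le (zero_le_one' ℝ), integral_Icc_eq_integral_Ioc]

theorem sqInt_eq_snd {f : ℝ × ℝ → ℝ} (hf : Continuous f) :
    sqInt f = ∫ y in (0:ℝ)..1, ∫ x in (0:ℝ)..1, f (x, y) := by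
  have h : sqInt f = sqInt (fun p => f p.swap) := by
    rw [sqInt, sqInt, Measure.volume_eq_prod, setIntegral_prod_swap]
  rw [h, sqInt_eq_fst (by fun_prop)]
  rfl

/-- Smooth functions on the plane satisfying the clamped boundary conditions on the unit square. -/
structure Clamped (w : ℝ × ℝ → ℝ) : Prop where
  contDiff : ContDiff ℝ (⊤ : ℕ∞) w
  fst_eq_zero : ∀ y, w (0, y) = 0 ∧ w (1, y) = 0
  snd_eq_zero : ∀ x, w (x, 0) = 0 ∧ w (x, 1) = 0
  pd_fst_eq_zero : ∀ v y, pd v w (0, y) = 0 ∧ pd v w (1, y) = 0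
  pd_snd_eq_zero : ∀ v x, pd v w (x, 0) = 0 ∧ pd v w (x, 1) = 0

theorem Clamped.add_const_mul {u w : ℝ × ℝ → ℝ} (hu : Clamped u) (hw : Clamped w) (c : ℝ) :
    Clamped (fun p => u p + c * w p) where
  contDiff := hu.contDiff.add (contDiff_const.mul hw.contDiff)
  fst_eq_zero y := by simp [hu.fst_eq_zero, hw.fst_eq_zero]
  snd_eq_zero y := by simp [hu.snd_eq_zero, hw.snd_eq_zero]
  pd_fst_eq_zero v y := by
    simp [pd_add hu.contDiff (contDiff_const.mul hw.contDiff), pd_const_mul hw.contDiff,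
      hu.pd_fst_eq_zero, hw.pd_fst_eq_zero]
  pd_snd_eq_zero v y := by
    simp [pd_add hu.contDiff (contDiff_const.mul hw.contDiff), pd_const_mul hw.contDiff,
      hu.pd_snd_eq_zero, hw.pd_snd_eq_zero]

theorem Clamped.sqInt_uxx_mul_uyy {w : ℝ × ℝ → ℝ} (hw : Clamped w) :
    sqInt (fun p => uxx w p * uyy w p) = sqInt (fun p => uxy w p ^ 2) := by
  have h := hw.contDiff
  have c1 : Continuous (uxx w) := ((h.pd _).pd _).continuous
  have c2 : Continuous (uyy w) := ((h.pd _).pd _).continuous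
  have c3 : Continuous (uxy w) := ((h.pd _).pd _).continuous
  have c4 : Continuous (pd (1, 0) w) := (h.pd _).continuous
  have c5 : Continuous (pd (1, 0) (uyy w)) := (((h.pd _).pd _).pd _).continuous
  have hx : ∀ y, ∫ x in (0:ℝ)..1, uxx w (x, y) * uyy w (x, y) =
      -∫ x in (0:ℝ)..1, pd (1, 0) w (x, y) * pd (1, 0) (uyy w) (x, y) := by
    intro y
    have := intervalIntegral.integral_mul_deriv_eq_deriv_mul (a := 0) (b := 1)
      (fun x _ => hasDerivAt_pd_fst ((h.pd (0, 1)).pd (0, 1)) x y)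
      (fun x _ => hasDerivAt_pd_fst (h.pd (1, 0)) x y)
      (((by fun_prop : Continuous fun x => pd (1, 0) (uyy w) (x, y))).intervalIntegrable _ _)
      (((by fun_prop : Continuous fun x => uxx w (x, y))).intervalIntegrable _ _)
    rw [(hw.pd_fst_eq_zero _ y).1, (hw.pd_fst_eq_zero _ y).2] at this
    simp only [mul_zero, sub_self, zero_sub] at this
    simp only [mul_comm (uxx w _), mul_comm (pd (1, 0) w _)]
    exact this
  have hy : ∀ x, ∫ y in (0:ℝ)..1, pd (1, 0) w (x, y) * pd (1, 0) (uyy w) (x, y) =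
      -∫ y in (0:ℝ)..1, uxy w (x, y) ^ 2 := by
    intro x
    have e : pd (1, 0) (uyy w) = pd (0, 1) (pd (0, 1) (pd (1, 0) w)) := by
      rw [uyy, pd_comm (h.pd _), pd_comm h]
    have := intervalIntegral.integral_mul_deriv_eq_deriv_mul (a := 0) (b := 1)
      (fun y _ => hasDerivAt_pd_snd (h.pd (1, 0)) x y)
      (fun y _ => hasDerivAt_pd_snd ((h.pd (1, 0)).pd (0, 1)) x y)
      (((by fun_prop : Continuous fun y => uxy w (x, y))).intervalIntegrable _ _)
      (by rw [← e]
          exact ((by fun_prop : Continuous fun y => pd (1, 0) (uyy w) (x, y))).intervalIntegrable _ _)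
    rw [(hw.pd_snd_eq_zero _ x).1, (hw.pd_snd_eq_zero _ x).2] at this
    simp only [zero_mul, sub_self, zero_sub] at this
    rw [e]
    simp only [sq]
    exact this
  rw [sqInt_eq_snd (c1.fun_mul c2)]
  simp only [hx]
  rw [intervalIntegral.integral_neg, ← sqInt_eq_snd (c4.fun_mul c5), sqInt_eq_fst (c4.fun_mul c5)]
  simp only [hy]
  rw [intervalIntegral.integral_neg, neg_neg, ← sqInt_eq_fst (c3.fun_pow 2)]

theorem Clamped.sqInt_mul_lap {w s : ℝ × ℝ → ℝ} (hw : Clamped w)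
    (hs : ContDiff ℝ (⊤ : ℕ∞) s) :
    sqInt (fun p => s p * lap w p) = sqInt (fun p => lap s p * w p) := by
  have h := hw.contDiff
  have green : ∀ f f' f'' g g' g'' : ℝ → ℝ, (∀ x, HasDerivAt f (f' x) x) →
      (∀ x, HasDerivAt f' (f'' x) x) → Continuous f'' → (∀ x, HasDerivAt g (g' x) x) →
      (∀ x, HasDerivAt g' (g'' x) x) → Continuous g'' → g 0 = 0 ∧ g 1 = 0 → g' 0 = 0 ∧ g' 1 = 0 →
      ∫ x in (0:ℝ)..1, f x * g'' x = ∫ x in (0:ℝ)..1, f'' x * g x := by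
    intro f f' f'' g g' g'' hf hf' hf'' hg hg' hg'' b b'
    have cf' : Continuous f' := continuous_iff_continuousAt.2 fun x => (hf' x).continuousAt
    have cg' : Continuous g' := continuous_iff_continuousAt.2 fun x => (hg' x).continuousAt
    rw [intervalIntegral.integral_mul_deriv_eq_deriv_mul (fun x _ => hf x) (fun x _ => hg' x)
      (cf'.intervalIntegrable _ _) (hg''.intervalIntegrable _ _),
      intervalIntegral.integral_mul_deriv_eq_deriv_mul (fun x _ => hf' x) (fun x _ => hg x)
      (hf''.intervalIntegrable _ _) (cg'.intervalIntegrable _ _)]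
    simp [b, b']
  have c1 : Continuous (uxx w) := ((h.pd _).pd _).continuous
  have c2 : Continuous (uyy w) := ((h.pd _).pd _).continuous
  have c3 : Continuous (uxx s) := ((hs.pd _).pd _).continuous
  have c4 : Continuous (uyy s) := ((hs.pd _).pd _).continuous
  have c5 := hs.continuous
  have c6 := h.continuous
  have hx : sqInt (fun p => s p * uxx w p) = sqInt (fun p => uxx s p * w p) := by
    rw [sqInt_eq_snd (c5.fun_mul c1), sqInt_eq_snd (c3.fun_mul c6)]
    refine intervalIntegral.integral_congr fun y _ => ?_
    exact green _ _ _ _ _ _ (fun x => hasDerivAt_pd_fst hs x y)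
      (fun x => hasDerivAt_pd_fst (hs.pd _) x y) (c3.comp (by fun_prop))
      (fun x => hasDerivAt_pd_fst h x y) (fun x => hasDerivAt_pd_fst (h.pd _) x y)
      (c1.comp (by fun_prop)) (hw.fst_eq_zero y) (hw.pd_fst_eq_zero _ y)
  have hy : sqInt (fun p => s p * uyy w p) = sqInt (fun p => uyy s p * w p) := by
    rw [sqInt_eq_fst (c5.fun_mul c2), sqInt_eq_fst (c4.fun_mul c6)]
    refine intervalIntegral.integral_congr fun x _ => ?_
    exact green _ _ _ _ _ _ (fun y => hasDerivAt_pd_snd hs x y)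
      (fun y => hasDerivAt_pd_snd (hs.pd _) x y) (c4.comp (by fun_prop))
      (fun y => hasDerivAt_pd_snd h x y) (fun y => hasDerivAt_pd_snd (h.pd _) x y)
      (c2.comp (by fun_prop)) (hw.snd_eq_zero x) (hw.pd_snd_eq_zero _ x)
  simp only [lap, mul_add, add_mul]
  rw [sqInt_add (c5.fun_mul c1) (c5.fun_mul c2), sqInt_add (c3.fun_mul c6) (c4.fun_mul c6), hx, hy]

theorem sqInt_lincomb_sq {f g : ℝ × ℝ → ℝ} (hf : Continuous f) (hg : Continuous g) (a b : ℝ) :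
    sqInt (fun p => (a * f p + b * g p) ^ 2) = a ^ 2 * sqInt (fun p => f p ^ 2) +
      2 * a * b * sqInt (fun p => f p * g p) + b ^ 2 * sqInt (fun p => g p ^ 2) := by
  rw [← sqInt_const_mul, ← sqInt_const_mul, ← sqInt_const_mul,
    ← sqInt_add (by fun_prop) (by fun_prop), ← sqInt_add (by fun_prop) (by fun_prop)]
  congr 1
  funext p
  ring

theorem sqInt_marginals_le {w : ℝ × ℝ → ℝ} (hw : Continuous w) :
    (∫ y in (0:ℝ)..1, (∫ x in (0:ℝ)..1, w (x, y)) ^ 2) +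
      (∫ x in (0:ℝ)..1, (∫ y in (0:ℝ)..1, w (x, y)) ^ 2) ≤
      sqInt (fun p => w p ^ 2) + sqInt w ^ 2 := by
  have hA : Continuous fun y => ∫ x in (0:ℝ)..1, w (x, y) :=
    intervalIntegral.continuous_parametric_intervalIntegral_of_continuous'
      (f := fun y x => w (x, y)) (by fun_prop) 0 1
  have hB : Continuous fun x => ∫ y in (0:ℝ)..1, w (x, y) :=
    intervalIntegral.continuous_parametric_intervalIntegral_of_continuous'
      (f := fun x y => w (x, y)) (by fun_prop) 0 1
  have mA := sqInt_eq_snd hw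
  have mB := sqInt_eq_fst hw
  set A := fun y => ∫ x in (0:ℝ)..1, w (x, y) with hAdef
  set B := fun x => ∫ y in (0:ℝ)..1, w (x, y) with hBdef
  change sqInt w = ∫ y in (0:ℝ)..1, A y at mA
  change sqInt w = ∫ x in (0:ℝ)..1, B x at mB
  change (∫ y in (0:ℝ)..1, A y ^ 2) + (∫ x in (0:ℝ)..1, B x ^ 2) ≤ _
  set m := sqInt w with hm
  have iw : ∀ c d : ℝ, ∀ y, ∫ x in (0:ℝ)..1, c * (c - 2 * w (x, y) - d) =
      -c ^ 2 - c * d + 2 * c * (c - A y) := by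
    intro c d y
    have i1 : IntervalIntegrable (fun x => w (x, y)) volume 0 1 :=
      (by fun_prop : Continuous fun x => w (x, y)).intervalIntegrable _ _
    have : ∀ x, c * (c - 2 * w (x, y) - d) = (c ^ 2 - c * d) - 2 * c * w (x, y) := fun x => by ring
    simp only [this]
    rw [intervalIntegral.integral_sub (by simp) (i1.const_mul _),
      intervalIntegral.integral_const_mul]
    simp only [intervalIntegral.integral_const, hAdef]
    simp
    ring
  have iw' : ∀ c d : ℝ, ∀ x, ∫ y in (0:ℝ)..1, c * (c - 2 * w (x, y) - d) =
      -c ^ 2 - c * d + 2 * c * (c - B x) := by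
    intro c d x
    have i1 : IntervalIntegrable (fun y => w (x, y)) volume 0 1 :=
      (by fun_prop : Continuous fun y => w (x, y)).intervalIntegrable _ _
    have : ∀ y, c * (c - 2 * w (x, y) - d) = (c ^ 2 - c * d) - 2 * c * w (x, y) := fun x => by ring
    simp only [this]
    rw [intervalIntegral.integral_sub (by simp) (i1.const_mul _),
      intervalIntegral.integral_const_mul]
    simp only [intervalIntegral.integral_const, hBdef]
    simp
    ring
  have e1 : sqInt (fun p => A p.2 * (A p.2 - 2 * w p - 2 * m)) =
      -(∫ y in (0:ℝ)..1, A y ^ 2) - 2 * m ^ 2 := by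
    rw [sqInt_eq_snd (by fun_prop)]
    simp only [iw, sub_self, mul_zero, add_zero]
    rw [intervalIntegral.integral_sub ((by fun_prop : Continuous _).intervalIntegrable _ _)
      ((by fun_prop : Continuous _).intervalIntegrable _ _), intervalIntegral.integral_neg,
      intervalIntegral.integral_mul_const, ← mA]
    ring
  have e2 : sqInt (fun p => B p.1 * (B p.1 - 2 * w p - 2 * m)) =
      -(∫ x in (0:ℝ)..1, B x ^ 2) - 2 * m ^ 2 := by
    rw [sqInt_eq_fst (by fun_prop)]
    simp only [iw', sub_self, mul_zero, add_zero]
    rw [intervalIntegral.integral_sub ((by fun_prop : Continuous _).intervalIntegrable _ _)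
      ((by fun_prop : Continuous _).intervalIntegrable _ _), intervalIntegral.integral_neg,
      intervalIntegral.integral_mul_const, ← mB]
    ring
  have e3 : sqInt (fun p => B p.1 * A p.2) = m ^ 2 := by
    rw [sqInt_eq_fst (by fun_prop)]
    simp only [intervalIntegral.integral_const_mul, intervalIntegral.integral_mul_const]
    rw [← mA, ← mB]
    ring
  have e4 : sqInt (fun p => (1 * w p + m * 1) ^ 2) = sqInt (fun p => w p ^ 2) + 3 * m ^ 2 := by
    rw [sqInt_lincomb_sq hw continuous_const]
    have : sqInt (fun _ => (1:ℝ) ^ 2) = 1 := by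
      rw [sqInt_eq_fst (by fun_prop)]; simp
    rw [this]
    simp only [mul_one]
    rw [show (sqInt fun p => w p) = m from rfl]
    ring
  have h0 : 0 ≤ sqInt (fun p => (w p - A p.2 - B p.1 + m) ^ 2) := sqInt_nonneg fun p => by positivity
  have h1 : sqInt (fun p => (w p - A p.2 - B p.1 + m) ^ 2) =
      sqInt (fun p => (1 * w p + m * 1) ^ 2) + sqInt (fun p => A p.2 * (A p.2 - 2 * w p - 2 * m)) +
      sqInt (fun p => B p.1 * (B p.1 - 2 * w p - 2 * m)) + 2 * sqInt (fun p => B p.1 * A p.2) := by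
    rw [← sqInt_const_mul 2 (fun p => B p.1 * A p.2), ← sqInt_add (by fun_prop) (by fun_prop),
      ← sqInt_add (by fun_prop) (by fun_prop), ← sqInt_add (by fun_prop) (by fun_prop)]
    congr 1
    funext p
    ring
  rw [h1, e1, e2, e3, e4] at h0
  linarith

/-- Comparison of the clamped plate with the periodic plate. -/
theorem Clamped.periodic_comparison {w : ℝ × ℝ → ℝ} (hw : Clamped w) :
    16 * π ^ 4 * (sqInt (fun p => w p ^ 2) - sqInt w ^ 2) ≤ sqInt (fun p => lap w p ^ 2) := by
  have h := hw.contDiff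
  have c0 := h.continuous
  have c1 : Continuous (uxx w) := ((h.pd _).pd _).continuous
  have c2 : Continuous (uyy w) := ((h.pd _).pd _).continuous
  have hA : Continuous fun y => ∫ x in (0:ℝ)..1, w (x, y) :=
    intervalIntegral.continuous_parametric_intervalIntegral_of_continuous'
      (f := fun y x => w (x, y)) (by fun_prop) 0 1
  have hB : Continuous fun x => ∫ y in (0:ℝ)..1, w (x, y) :=
    intervalIntegral.continuous_parametric_intervalIntegral_of_continuous'
      (f := fun x y => w (x, y)) (by fun_prop) 0 1
  have hA2 : Continuous fun y => ∫ x in (0:ℝ)..1, w (x, y) ^ 2 :=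
    intervalIntegral.continuous_parametric_intervalIntegral_of_continuous'
      (f := fun y x => w (x, y) ^ 2) (by fun_prop) 0 1
  have hB2 : Continuous fun x => ∫ y in (0:ℝ)..1, w (x, y) ^ 2 :=
    intervalIntegral.continuous_parametric_intervalIntegral_of_continuous'
      (f := fun x y => w (x, y) ^ 2) (by fun_prop) 0 1
  have hX2 : Continuous fun y => ∫ x in (0:ℝ)..1, uxx w (x, y) ^ 2 :=
    intervalIntegral.continuous_parametric_intervalIntegral_of_continuous'
      (f := fun y x => uxx w (x, y) ^ 2) (by fun_prop) 0 1
  have hY2 : Continuous fun x => ∫ y in (0:ℝ)..1, uyy w (x, y) ^ 2 :=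
    intervalIntegral.continuous_parametric_intervalIntegral_of_continuous'
      (f := fun x y => uyy w (x, y) ^ 2) (by fun_prop) 0 1
  have hx : 16 * π ^ 4 * (sqInt (fun p => w p ^ 2) -
      ∫ y in (0:ℝ)..1, (∫ x in (0:ℝ)..1, w (x, y)) ^ 2) ≤ sqInt (fun p => uxx w p ^ 2) := by
    rw [sqInt_eq_snd (by fun_prop), sqInt_eq_snd (by fun_prop),
      ← intervalIntegral.integral_sub (hA2.intervalIntegrable _ _)
        ((hA.fun_pow 2).intervalIntegrable _ _), ← intervalIntegral.integral_const_mul]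
    refine intervalIntegral.integral_mono_on zero_le_one
      ((by fun_prop : Continuous _).intervalIntegrable _ _) (hX2.intervalIntegrable _ _)
      fun y _ => ?_
    exact wirtinger_second_order (fun x => hasDerivAt_pd_fst h x y)
      (fun x => hasDerivAt_pd_fst (h.pd _) x y) (c1.comp (by fun_prop))
      (by rw [(hw.fst_eq_zero y).1, (hw.fst_eq_zero y).2])
      (by rw [(hw.pd_fst_eq_zero _ y).1, (hw.pd_fst_eq_zero _ y).2])
  have hy : 16 * π ^ 4 * (sqInt (fun p => w p ^ 2) -
      ∫ x in (0:ℝ)..1, (∫ y in (0:ℝ)..1, w (x, y)) ^ 2) ≤ sqInt (fun p => uyy w p ^ 2) := by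
    rw [sqInt_eq_fst (by fun_prop), sqInt_eq_fst (by fun_prop),
      ← intervalIntegral.integral_sub (hB2.intervalIntegrable _ _)
        ((hB.fun_pow 2).intervalIntegrable _ _), ← intervalIntegral.integral_const_mul]
    refine intervalIntegral.integral_mono_on zero_le_one
      ((by fun_prop : Continuous _).intervalIntegrable _ _) (hY2.intervalIntegrable _ _)
      fun x _ => ?_
    exact wirtinger_second_order (fun y => hasDerivAt_pd_snd h x y)
      (fun y => hasDerivAt_pd_snd (h.pd _) x y) (c2.comp (by fun_prop))
      (by rw [(hw.snd_eq_zero x).1, (hw.snd_eq_zero x).2])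
      (by rw [(hw.pd_snd_eq_zero _ x).1, (hw.pd_snd_eq_zero _ x).2])
  have hxy : 0 ≤ sqInt (fun p => uxx w p * uyy w p) := by
    rw [hw.sqInt_uxx_mul_uyy]
    exact sqInt_nonneg fun p => by positivity
  have hl : sqInt (fun p => lap w p ^ 2) = sqInt (fun p => uxx w p ^ 2) +
      2 * sqInt (fun p => uxx w p * uyy w p) + sqInt (fun p => uyy w p ^ 2) := by
    have := sqInt_lincomb_sq c1 c2 1 1
    simpa only [one_mul, one_pow, mul_one, lap] using this
  have hm := mul_le_mul_of_nonneg_left (sqInt_marginals_le c0) (by positivity : 0 ≤ 16 * π ^ 4)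
  rw [hl]
  linarith

/-- **Lehmann's lower bound**: a trial function `U = Δ s` with clamped boundary conditions bounds the
Rayleigh quotient from below. -/
theorem Clamped.lehmann_bound {U s : ℝ × ℝ → ℝ} (hU : Clamped U) (hs : ContDiff ℝ (⊤ : ℕ∞) s)
    (hlap : lap s = U) {μ ρ : ℝ} (hμ : 0 < μ) (hμρ : μ < ρ) (hρ : ρ ≤ 16 * π ^ 4)
    (hupper : sqInt (fun p => lap U p ^ 2) < ρ * sqInt (fun p => U p ^ 2))
    (hlower : μ * (ρ * sqInt (fun p => s p ^ 2) - sqInt (fun p => U p ^ 2)) ≤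
      ρ * sqInt (fun p => U p ^ 2) - sqInt (fun p => lap U p ^ 2))
    {v : ℝ × ℝ → ℝ} (hv : Clamped v) :
    μ * sqInt (fun p => v p ^ 2) ≤ sqInt (fun p => lap v p ^ 2) := by
  have hcomp : ∀ w : ℝ × ℝ → ℝ, Clamped w → sqInt w = 0 →
      ρ * sqInt (fun p => w p ^ 2) ≤ sqInt (fun p => lap w p ^ 2) := by
    intro w hw h0
    have h1 := hw.periodic_comparison
    have h2 : 0 ≤ sqInt (fun p => w p ^ 2) := sqInt_nonneg fun p => by positivity
    rw [h0] at h1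
    nlinarith
  have hU0 : sqInt U ≠ 0 := fun h => absurd (hcomp U hU h) (not_le.2 hupper)
  obtain ⟨a, ha⟩ : ∃ a, a = sqInt v / sqInt U := ⟨_, rfl⟩
  have hw := hv.add_const_mul hU (-a)
  obtain ⟨w, hwdef⟩ : ∃ w, w = fun p => v p + -a * U p := ⟨_, rfl⟩
  rw [← hwdef] at hw
  have cU := hU.contDiff.continuous
  have cv := hv.contDiff.continuous
  have cw := hw.contDiff.continuous
  have clU := hU.contDiff.continuous_lap
  have clw := hw.contDiff.continuous_lap
  have cs := hs.continuous
  have hw0 : sqInt w = 0 := by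
    rw [hwdef, sqInt_add cv (by fun_prop), sqInt_const_mul, ha]
    field_simp
    ring
  have hvw : v = fun p => 1 * w p + a * U p := by
    funext p
    rw [hwdef]
    ring
  have hlv : lap v = fun p => 1 * lap w p + a * lap U p := by
    rw [hvw, lap_add (contDiff_const.mul hw.contDiff) (contDiff_const.mul hU.contDiff),
      lap_const_mul hw.contDiff, lap_const_mul hU.contDiff]
  have hg1 : sqInt (fun p => lap w p * s p) = sqInt (fun p => w p * U p) := by
    have := hw.sqInt_mul_lap hs
    rw [hlap] at this
    simpa only [mul_comm] using this
  have hg2 : sqInt (fun p => lap U p * s p) = sqInt (fun p => U p ^ 2) := by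
    have := hU.sqInt_mul_lap hs
    rw [hlap] at this
    simpa only [mul_comm, sq] using this
  have hcw := hcomp w hw hw0
  have ev := sqInt_lincomb_sq cw cU 1 a
  have elv := sqInt_lincomb_sq clw clU 1 a
  have cg : Continuous fun p => 1 * lap U p + -μ * s p := by fun_prop
  have e1 := sqInt_lincomb_sq clU cs 1 (-μ)
  have e2 := sqInt_lincomb_sq clw cg (ρ - μ) (ρ * a)
  have e3 : sqInt (fun p => lap w p * (1 * lap U p + -μ * s p)) =
      sqInt (fun p => lap w p * lap U p) - μ * sqInt (fun p => w p * U p) := by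
    rw [← hg1, ← sqInt_const_mul, ← sqInt_sub (by fun_prop) (by fun_prop)]
    congr 1
    funext p
    ring
  have h0 : 0 ≤ sqInt (fun p => ((ρ - μ) * lap w p + ρ * a * (1 * lap U p + -μ * s p)) ^ 2) :=
    sqInt_nonneg fun p => by positivity
  rw [e2, e3, e1, hg2] at h0
  rw [hlv, elv]
  rw [congrArg (fun f : ℝ × ℝ → ℝ => sqInt fun p => f p ^ 2) hvw, ev]
  generalize sqInt (fun p => lap w p ^ 2) = D at *
  generalize sqInt (fun p => w p ^ 2) = W at *
  generalize sqInt (fun p => lap w p * lap U p) = b at *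
  generalize sqInt (fun p => w p * U p) = c at *
  generalize sqInt (fun p => lap U p ^ 2) = E at *
  generalize sqInt (fun p => U p ^ 2) = N at *
  generalize sqInt (fun p => s p ^ 2) = S at *
  have hρ0 : 0 < ρ := hμ.trans hμρ
  have hpos : 0 < ρ * (ρ - μ) := mul_pos hρ0 (sub_pos.2 hμρ)
  have t1 : 0 ≤ (ρ - μ) * μ * (D - ρ * W) :=
    mul_nonneg (mul_nonneg (sub_pos.2 hμρ).le hμ.le) (sub_nonneg.2 hcw)
  have t2 : 0 ≤ ρ * μ * a ^ 2 * (ρ * N - E - μ * (ρ * S - N)) :=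
    mul_nonneg (by positivity) (sub_nonneg.2 hlower)
  refine sub_nonneg.1 (nonneg_of_mul_nonneg_right ?_ hpos)
  nlinarith

/-- The function `∑ a * φ i (x) * ψ j (y)`, summed over the terms `(i, j, a)` of the list `l`. -/
def tensorSum (φ ψ : ℕ → ℝ → ℝ) (l : List (ℕ × ℕ × ℤ)) (p : ℝ × ℝ) : ℝ :=
  (l.map fun m => (m.2.2 : ℝ) * (φ m.1 p.1 * ψ m.2.1 p.2)).sum

theorem tensorSum_nil (φ ψ : ℕ → ℝ → ℝ) (p : ℝ × ℝ) : tensorSum φ ψ [] p = 0 := rfl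

theorem tensorSum_cons (φ ψ : ℕ → ℝ → ℝ) (m : ℕ × ℕ × ℤ) (l : List (ℕ × ℕ × ℤ)) (p : ℝ × ℝ) :
    tensorSum φ ψ (m :: l) p = m.2.2 * (φ m.1 p.1 * ψ m.2.1 p.2) + tensorSum φ ψ l p := by
  simp [tensorSum]

theorem tensorSum_append (φ ψ : ℕ → ℝ → ℝ) (l l' : List (ℕ × ℕ × ℤ)) (p : ℝ × ℝ) :
    tensorSum φ ψ (l ++ l') p = tensorSum φ ψ l p + tensorSum φ ψ l' p := by
  simp [tensorSum]

theorem tensorSum_eq_zero_of_fst {φ : ℕ → ℝ → ℝ} (ψ : ℕ → ℝ → ℝ) {l : List (ℕ × ℕ × ℤ)} {p : ℝ × ℝ}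
    (h : ∀ m ∈ l, φ m.1 p.1 = 0) : tensorSum φ ψ l p = 0 :=
  List.sum_eq_zero fun x hx => by
    obtain ⟨m, hm, rfl⟩ := List.mem_map.1 hx
    simp [h m hm]

theorem tensorSum_eq_zero_of_snd (φ : ℕ → ℝ → ℝ) {ψ : ℕ → ℝ → ℝ} {l : List (ℕ × ℕ × ℤ)} {p : ℝ × ℝ}
    (h : ∀ m ∈ l, ψ m.2.1 p.2 = 0) : tensorSum φ ψ l p = 0 :=
  List.sum_eq_zero fun x hx => by
    obtain ⟨m, hm, rfl⟩ := List.mem_map.1 hx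
    simp [h m hm]

theorem ContDiff.tensorSum {φ ψ : ℕ → ℝ → ℝ} {n : WithTop ℕ∞} (hφ : ∀ k, ContDiff ℝ n (φ k))
    (hψ : ∀ k, ContDiff ℝ n (ψ k)) (l : List (ℕ × ℕ × ℤ)) : ContDiff ℝ n (tensorSum φ ψ l) := by
  induction l with
  | nil => exact contDiff_const
  | cons m l ih =>
    rw [funext (tensorSum_cons φ ψ m l)]
    exact (contDiff_const.mul (((hφ _).comp contDiff_fst).mul ((hψ _).comp contDiff_snd))).add ih

theorem pd_fst_mul {f f' g : ℝ → ℝ} (hf : ∀ x, HasDerivAt f (f' x) x) (hg : Differentiable ℝ g) :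
    pd (1, 0) (fun p => f p.1 * g p.2) = fun p => f' p.1 * g p.2 := by
  funext p
  have h := ((hf p.1).comp_hasFDerivAt p
    (hasFDerivAt_fst (𝕜 := ℝ) (E := ℝ) (F := ℝ))).fun_mul
    ((hg p.2).hasDerivAt.comp_hasFDerivAt p
    (hasFDerivAt_snd (𝕜 := ℝ) (E := ℝ) (F := ℝ)))
  simp only [Function.comp_def] at h
  simp [pd, h.fderiv, mul_comm]

theorem pd_snd_mul {f g g' : ℝ → ℝ} (hf : Differentiable ℝ f) (hg : ∀ x, HasDerivAt g (g' x) x) :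
    pd (0, 1) (fun p => f p.1 * g p.2) = fun p => f p.1 * g' p.2 := by
  funext p
  have h := ((hf p.1).hasDerivAt.comp_hasFDerivAt p
    (hasFDerivAt_fst (𝕜 := ℝ) (E := ℝ) (F := ℝ))).fun_mul
    ((hg p.2).comp_hasFDerivAt p
    (hasFDerivAt_snd (𝕜 := ℝ) (E := ℝ) (F := ℝ)))
  simp only [Function.comp_def] at h
  simp [pd, h.fderiv]

theorem pd_tensorSum_fst {φ φ' ψ : ℕ → ℝ → ℝ} (hφ : ∀ k, ContDiff ℝ (⊤ : ℕ∞) (φ k))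
    (hψ : ∀ k, ContDiff ℝ (⊤ : ℕ∞) (ψ k)) (h : ∀ k x, HasDerivAt (φ k) (φ' k x) x)
    (l : List (ℕ × ℕ × ℤ)) : pd (1, 0) (tensorSum φ ψ l) = tensorSum φ' ψ l := by
  induction l with
  | nil =>
    funext p
    simp [pd, funext (tensorSum_nil φ ψ), tensorSum_nil]
  | cons m l ih =>
    have c : ContDiff ℝ (⊤ : ℕ∞) fun p : ℝ × ℝ => φ m.1 p.1 * ψ m.2.1 p.2 :=
      ((hφ m.1).comp contDiff_fst).mul ((hψ m.2.1).comp contDiff_snd)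
    rw [funext (tensorSum_cons φ ψ m l), funext (tensorSum_cons φ' ψ m l),
      pd_add (contDiff_const.mul c) (ContDiff.tensorSum hφ hψ l), pd_const_mul c, ih,
      pd_fst_mul (h m.1) ((hψ m.2.1).differentiable (by simp))]

theorem pd_tensorSum_snd {φ ψ ψ' : ℕ → ℝ → ℝ} (hφ : ∀ k, ContDiff ℝ (⊤ : ℕ∞) (φ k))
    (hψ : ∀ k, ContDiff ℝ (⊤ : ℕ∞) (ψ k)) (h : ∀ k x, HasDerivAt (ψ k) (ψ' k x) x)
    (l : List (ℕ × ℕ × ℤ)) : pd (0, 1) (tensorSum φ ψ l) = tensorSum φ ψ' l := by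
  induction l with
  | nil =>
    funext p
    simp [pd, funext (tensorSum_nil φ ψ), tensorSum_nil]
  | cons m l ih =>
    have c : ContDiff ℝ (⊤ : ℕ∞) fun p : ℝ × ℝ => φ m.1 p.1 * ψ m.2.1 p.2 :=
      ((hφ m.1).comp contDiff_fst).mul ((hψ m.2.1).comp contDiff_snd)
    rw [funext (tensorSum_cons φ ψ m l), funext (tensorSum_cons φ ψ' m l),
      pd_add (contDiff_const.mul c) (ContDiff.tensorSum hφ hψ l), pd_const_mul c, ih,
      pd_snd_mul ((hφ m.1).differentiable (by simp)) (h m.2.1)]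

theorem contDiff_of_hasDerivAt {f f' : ℝ → ℝ} (hf : ContDiff ℝ (⊤ : ℕ∞) f)
    (h : ∀ x, HasDerivAt f (f' x) x) : ContDiff ℝ (⊤ : ℕ∞) f' := by
  rw [← funext fun x => (h x).deriv]
  exact (contDiff_infty_iff_deriv.1 hf).2

theorem lap_tensorSum {φ φ' φ'' : ℕ → ℝ → ℝ} (hφ : ∀ k, ContDiff ℝ (⊤ : ℕ∞) (φ k))
    (h : ∀ k x, HasDerivAt (φ k) (φ' k x) x) (h' : ∀ k x, HasDerivAt (φ' k) (φ'' k x) x)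
    (l : List (ℕ × ℕ × ℤ)) :
    lap (tensorSum φ φ l) = fun p => tensorSum φ'' φ l p + tensorSum φ φ'' l p := by
  have hφ' := fun k => contDiff_of_hasDerivAt (hφ k) (h k)
  funext p
  rw [lap, uxx, uyy, pd_tensorSum_fst hφ hφ h, pd_tensorSum_fst hφ' hφ h',
    pd_tensorSum_snd hφ hφ h, pd_tensorSum_snd hφ hφ' h']

/-- The normalized parabola `t(x) = 4 * x * (1 - x)`. -/
def par (x : ℝ) : ℝ := 4 * x * (1 - x)

theorem contDiff_par {n : WithTop ℕ∞} : ContDiff ℝ n par := by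
  unfold par
  fun_prop

theorem continuous_par : Continuous par := contDiff_par.continuous (n := 0)

theorem hasDerivAt_par (x : ℝ) : HasDerivAt par (4 - 8 * x) x := by
  have h := ((hasDerivAt_id x).const_mul 4).mul ((hasDerivAt_id x).const_sub 1)
  exact h.congr_deriv (by simp; ring)

theorem par_mem_Icc {x : ℝ} (hx : x ∈ Set.Icc (0:ℝ) 1) : par x ∈ Set.Icc (0:ℝ) 1 :=
  ⟨by have := mul_nonneg hx.1 (sub_nonneg.2 hx.2); unfold par; linarith,
    by unfold par; nlinarith [sq_nonneg (2 * x - 1)]⟩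

theorem par_pos_iff {x : ℝ} : 0 < par x ↔ x ∈ Set.Ioo (0:ℝ) 1 := by
  constructor
  · intro h
    unfold par at h
    constructor <;> nlinarith
  · rintro ⟨h0, h1⟩
    exact mul_pos (by linarith) (by linarith)

/-- The second derivative of `par ^ k`. -/
def parPowDeriv2 (k : ℕ) (x : ℝ) : ℝ :=
  16 * (k * (k - 1)) * par x ^ (k - 2) + -8 * (k * (2 * k - 1)) * par x ^ (k - 1)

theorem hasDerivAt_par_pow (k : ℕ) (x : ℝ) :
    HasDerivAt (fun x => par x ^ k) (k * par x ^ (k - 1) * (4 - 8 * x)) x :=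
  (hasDerivAt_par x).fun_pow k

theorem hasDerivAt_par_pow_deriv (k : ℕ) (x : ℝ) :
    HasDerivAt (fun x => k * par x ^ (k - 1) * (4 - 8 * x)) (parPowDeriv2 k x) x := by
  have h := ((hasDerivAt_par_pow (k - 1) x).const_mul (k : ℝ)).fun_mul
    (((hasDerivAt_id x).const_mul 8).const_sub 4)
  refine h.congr_deriv ?_
  rcases k with _ | _ | k
  · simp [parPowDeriv2]
  · simp [parPowDeriv2]
    norm_num
  · simp only [parPowDeriv2, par, Nat.add_sub_cancel, Nat.reduceSubDiff, id]
    push_cast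
    ring

/-- The polynomial `∑ a * t(x) ^ i * t(y) ^ j` given by its list of terms. -/
def parPoly (l : List (ℕ × ℕ × ℤ)) : ℝ × ℝ → ℝ :=
  tensorSum (fun k x => par x ^ k) (fun k x => par x ^ k) l

theorem contDiff_parPoly (l : List (ℕ × ℕ × ℤ)) : ContDiff ℝ (⊤ : ℕ∞) (parPoly l) :=
  ContDiff.tensorSum (fun k => contDiff_par.pow k) (fun k => contDiff_par.pow k) l

/-- The terms of the Laplacian of `∑ a * t(x) ^ i * t(y) ^ j`, where `t(x) = 4 * x * (1 - x)`. -/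
def lapCoeffs (l : List (ℕ × ℕ × ℤ)) : List (ℕ × ℕ × ℤ) :=
  l.flatMap fun m =>
    [(m.1 - 2, m.2.1, 16 * (m.1 * (m.1 - 1)) * m.2.2),
     (m.1 - 1, m.2.1, -8 * (m.1 * (2 * m.1 - 1)) * m.2.2),
     (m.1, m.2.1 - 2, 16 * (m.2.1 * (m.2.1 - 1)) * m.2.2),
     (m.1, m.2.1 - 1, -8 * (m.2.1 * (2 * m.2.1 - 1)) * m.2.2)]

theorem lap_parPoly_eq_tensorSum (l : List (ℕ × ℕ × ℤ)) :
    lap (parPoly l) = fun p => tensorSum parPowDeriv2 (fun k x => par x ^ k) l p +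
      tensorSum (fun k x => par x ^ k) parPowDeriv2 l p :=
  lap_tensorSum (fun k => contDiff_par.pow k) hasDerivAt_par_pow hasDerivAt_par_pow_deriv l

theorem lap_parPoly (l : List (ℕ × ℕ × ℤ)) : lap (parPoly l) = parPoly (lapCoeffs l) := by
  rw [lap_parPoly_eq_tensorSum]
  funext p
  induction l with
  | nil => simp [parPoly, lapCoeffs, tensorSum]
  | cons m l ih =>
    have : lapCoeffs (m :: l) = [(m.1 - 2, m.2.1, 16 * (m.1 * (m.1 - 1)) * m.2.2),
     (m.1 - 1, m.2.1, -8 * (m.1 * (2 * m.1 - 1)) * m.2.2),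
     (m.1, m.2.1 - 2, 16 * (m.2.1 * (m.2.1 - 1)) * m.2.2),
     (m.1, m.2.1 - 1, -8 * (m.2.1 * (2 * m.2.1 - 1)) * m.2.2)] ++ lapCoeffs l := rfl
    simp only [parPoly] at ih ⊢
    rw [this, tensorSum_append, ← ih]
    simp only [tensorSum_cons, tensorSum_nil, parPowDeriv2]
    push_cast
    ring

/-- Add a term to a list of terms, merging it with a term of the same bidegree. -/
def addTerm (m : ℕ × ℕ × ℤ) : List (ℕ × ℕ × ℤ) → List (ℕ × ℕ × ℤ)
  | [] => [m]
  | x :: l => bif Nat.beq m.1 x.1 && Nat.beq m.2.1 x.2.1 then (x.1, x.2.1, m.2.2 + x.2.2) :: l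
      else x :: addTerm m l

/-- Whether all coefficients cancel after collecting terms. -/
def cancels (l : List (ℕ × ℕ × ℤ)) : Bool :=
  (l.foldr addTerm []).all fun m => m.2.2 == 0

/-- The terms of the negative of a polynomial. -/
def negCoeffs (l : List (ℕ × ℕ × ℤ)) : List (ℕ × ℕ × ℤ) := l.map fun m => (m.1, m.2.1, -m.2.2)

theorem tensorSum_addTerm (φ ψ : ℕ → ℝ → ℝ) (m : ℕ × ℕ × ℤ) (l : List (ℕ × ℕ × ℤ)) (p : ℝ × ℝ) :
    tensorSum φ ψ (addTerm m l) p = tensorSum φ ψ (m :: l) p := by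
  induction l with
  | nil => rfl
  | cons x l ih =>
    rw [addTerm]
    cases h : (Nat.beq m.1 x.1 && Nat.beq m.2.1 x.2.1)
    · simp only [cond_false, tensorSum_cons, ih]
      ring
    · rw [Bool.and_eq_true] at h
      have h1 := Nat.eq_of_beq_eq_true h.1
      have h2 := Nat.eq_of_beq_eq_true h.2
      simp only [cond_true, tensorSum_cons, h1, h2]
      push_cast
      ring

theorem tensorSum_eq_zero_of_cancels (φ ψ : ℕ → ℝ → ℝ) {l : List (ℕ × ℕ × ℤ)} (h : cancels l = true)
    (p : ℝ × ℝ) : tensorSum φ ψ l p = 0 := by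
  have e : tensorSum φ ψ (l.foldr addTerm []) p = tensorSum φ ψ l p := by
    clear h
    induction l with
    | nil => rfl
    | cons m l ih => rw [List.foldr_cons, tensorSum_addTerm, tensorSum_cons, tensorSum_cons, ih]
  rw [← e]
  refine List.sum_eq_zero fun x hx => ?_
  obtain ⟨m, hm, rfl⟩ := List.mem_map.1 hx
  have := List.all_eq_true.1 h m hm
  rw [beq_iff_eq] at this
  simp [this]

theorem tensorSum_negCoeffs (φ ψ : ℕ → ℝ → ℝ) (l : List (ℕ × ℕ × ℤ)) (p : ℝ × ℝ) :
    tensorSum φ ψ (negCoeffs l) p = -tensorSum φ ψ l p := by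
  induction l with
  | nil => simp [negCoeffs, tensorSum]
  | cons m l ih =>
    have : negCoeffs (m :: l) = (m.1, m.2.1, -m.2.2) :: negCoeffs l := rfl
    rw [this, tensorSum_cons, tensorSum_cons, ih]
    push_cast
    ring

theorem lap_parPoly_of_cancels {l l' : List (ℕ × ℕ × ℤ)}
    (h : cancels (lapCoeffs l ++ negCoeffs l') = true) : lap (parPoly l) = parPoly l' := by
  rw [lap_parPoly]
  funext p
  have := tensorSum_eq_zero_of_cancels (fun k x => par x ^ k) (fun k x => par x ^ k) h p
  rw [tensorSum_append, tensorSum_negCoeffs] at this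
  exact eq_of_sub_eq_zero this

theorem clamped_parPoly {l : List (ℕ × ℕ × ℤ)} (hl : ∀ m ∈ l, 2 ≤ m.1 ∧ 2 ≤ m.2.1) :
    Clamped (parPoly l) := by
  have h0 : par 0 = 0 := by simp [par]
  have h1 : par 1 = 0 := by simp [par]
  have c := contDiff_parPoly l
  have zx : ∀ x y, par x = 0 → parPoly l (x, y) = 0 := fun x y hx =>
    tensorSum_eq_zero_of_fst _ fun m hm => by
      have := hl m hm
      simp only [hx]
      exact zero_pow (by omega)
  have zy : ∀ x y, par y = 0 → parPoly l (x, y) = 0 := fun x y hx =>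
    tensorSum_eq_zero_of_snd _ fun m hm => by
      have := hl m hm
      simp only [hx]
      exact zero_pow (by omega)
  have split : ∀ v p, pd v (parPoly l) p =
      v.1 * pd (1, 0) (parPoly l) p + v.2 * pd (0, 1) (parPoly l) p := by
    intro v p
    have : v = v.1 • ((1, 0) : ℝ × ℝ) + v.2 • ((0, 1) : ℝ × ℝ) := by ext <;> simp
    simp only [pd]
    conv_lhs => rw [this, map_add, map_smul, map_smul]
    rfl
  have d1 : pd (1, 0) (parPoly l) = _ := pd_tensorSum_fst (fun k => contDiff_par.pow k)
    (fun k => contDiff_par.pow k) hasDerivAt_par_pow l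
  have d2 : pd (0, 1) (parPoly l) = _ := pd_tensorSum_snd (fun k => contDiff_par.pow k)
    (fun k => contDiff_par.pow k) hasDerivAt_par_pow l
  have gx : ∀ v x y, par x = 0 → pd v (parPoly l) (x, y) = 0 := by
    intro v x y hx
    rw [split, d1, d2, tensorSum_eq_zero_of_fst, tensorSum_eq_zero_of_fst]
    · simp
    · intro m hm
      have := hl m hm
      simp only [hx]
      exact zero_pow (by omega)
    · intro m hm
      have := hl m hm
      simp only [hx]
      rw [zero_pow (by omega)]
      simp
  have gy : ∀ v x y, par y = 0 → pd v (parPoly l) (x, y) = 0 := by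
    intro v x y hx
    rw [split, d1, d2, tensorSum_eq_zero_of_snd, tensorSum_eq_zero_of_snd]
    · simp
    · intro m hm
      have := hl m hm
      simp only [hx]
      rw [zero_pow (by omega)]
      simp
    · intro m hm
      have := hl m hm
      simp only [hx]
      exact zero_pow (by omega)
  exact ⟨c, fun y => ⟨zx _ _ h0, zx _ _ h1⟩, fun y => ⟨zy _ _ h0, zy _ _ h1⟩,
    fun v y => ⟨gx _ _ _ h0, gx _ _ _ h1⟩, fun v y => ⟨gy _ _ _ h0, gy _ _ _ h1⟩⟩

/-- The moments `∫ t ^ k` over the unit interval. -/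
def parMoment (k : ℕ) : ℝ := ∫ x in (0:ℝ)..1, par x ^ k

theorem parMoment_zero : parMoment 0 = 1 := by simp [parMoment]

theorem parMoment_succ (k : ℕ) : (2 * k + 3) * parMoment (k + 1) = (2 * k + 2) * parMoment k := by
  have hd : ∀ x ∈ Set.uIcc (0:ℝ) 1, HasDerivAt (fun x => (2 * x - 1) * par x ^ (k + 1))
      ((4 * k + 6) * par x ^ (k + 1) - (4 * k + 4) * par x ^ k) x := by
    intro x _
    have h := (((hasDerivAt_id x).const_mul 2).sub_const 1).fun_mul (hasDerivAt_par_pow (k + 1) x)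
    refine h.congr_deriv ?_
    simp only [par, id, Nat.add_sub_cancel]
    push_cast
    ring
  have cp := continuous_par
  have h := intervalIntegral.integral_eq_sub_of_hasDerivAt hd
    ((by fun_prop : Continuous _).intervalIntegrable _ _)
  rw [intervalIntegral.integral_sub ((by fun_prop : Continuous _).intervalIntegrable _ _)
    ((by fun_prop : Continuous _).intervalIntegrable _ _), intervalIntegral.integral_const_mul,
    intervalIntegral.integral_const_mul] at h
  have h0 : par 0 = 0 := by simp [par]
  have h1 : par 1 = 0 := by simp [par]
  simp only [h0, h1, ne_eq, Nat.succ_ne_zero, not_false_eq_true, zero_pow, mul_zero, sub_self] at h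
  change (4 * (k:ℝ) + 6) * parMoment (k + 1) - (4 * k + 4) * parMoment k = 0 at h
  linarith

theorem sqInt_parPoly_mul (l l' : List (ℕ × ℕ × ℤ)) :
    sqInt (fun p => parPoly l p * parPoly l' p) =
      (l.map fun m => (m.2.2 : ℝ) * (l'.map fun m' => (m'.2.2 : ℝ) *
        (parMoment (m.1 + m'.1) * parMoment (m.2.1 + m'.2.1))).sum).sum := by
  have cp := continuous_par
  have c : ∀ l, Continuous (parPoly l) := fun l => (contDiff_parPoly l).continuous
  have prod : ∀ i j, sqInt (fun p => par p.1 ^ i * par p.2 ^ j) = parMoment i * parMoment j := by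
    intro i j
    rw [sqInt_eq_fst (by fun_prop)]
    simp only [intervalIntegral.integral_const_mul, intervalIntegral.integral_mul_const]
    rfl
  have mono : ∀ (m : ℕ × ℕ × ℤ) (l' : List (ℕ × ℕ × ℤ)),
      sqInt (fun p => par p.1 ^ m.1 * par p.2 ^ m.2.1 * parPoly l' p) =
      (l'.map fun m' => (m'.2.2 : ℝ) *
        (parMoment (m.1 + m'.1) * parMoment (m.2.1 + m'.2.1))).sum := by
    intro m l'
    induction l' with
    | nil => simp [parPoly, tensorSum, sqInt]
    | cons m' l' ih =>
      have cl := c l'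
      rw [List.map_cons, List.sum_cons, ← ih, ← prod, ← sqInt_const_mul,
        ← sqInt_add (by fun_prop) (by fun_prop)]
      congr 1
      funext p
      rw [parPoly, tensorSum_cons]
      simp only [parPoly]
      ring
  induction l with
  | nil => simp [parPoly, tensorSum, sqInt]
  | cons m l ih =>
    have cl := c l
    have cl' := c l'
    rw [List.map_cons, List.sum_cons, ← ih, ← mono, ← sqInt_const_mul,
      ← sqInt_add (by fun_prop) (by fun_prop)]
    congr 1
    funext p
    simp only [parPoly, tensorSum_cons]
    ring

theorem Adm.eq_zero {Ω : Set (ℝ × ℝ)} {u : ℝ × ℝ → ℝ} (hu : Adm Ω u) {p : ℝ × ℝ} (hp : p ∉ Ω) :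
    u p = 0 :=
  image_eq_zero_of_notMem_tsupport fun h => hp (hu.2.2 h)

theorem Adm.pd {Ω : Set (ℝ × ℝ)} {u : ℝ × ℝ → ℝ} (hu : Adm Ω u) (v : ℝ × ℝ) : Adm Ω (pd v u) := by
  have h : tsupport (_root_.pd v u) ⊆ tsupport u := by
    refine closure_minimal (fun p hp => support_fderiv_subset ℝ (f := u) ?_) isClosed_closure
    intro h
    exact hp (by simp [_root_.pd, h])
  exact ⟨hu.1.pd v, hu.2.1.of_isClosed_subset isClosed_closure h, h.trans hu.2.2⟩

theorem Rect_one : Rect 1 = Set.Ioo (0:ℝ) 1 ×ˢ Set.Ioo (0:ℝ) 1 := by simp [Rect]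

theorem Adm.clamped {u : ℝ × ℝ → ℝ} (hu : Adm (Rect 1) u) : Clamped u := by
  rw [Rect_one] at hu
  have hx : ∀ y, ((0:ℝ), y) ∉ Set.Ioo (0:ℝ) 1 ×ˢ Set.Ioo (0:ℝ) 1 ∧
      ((1:ℝ), y) ∉ Set.Ioo (0:ℝ) 1 ×ˢ Set.Ioo (0:ℝ) 1 := fun y => by simp
  have hy : ∀ x, (x, (0:ℝ)) ∉ Set.Ioo (0:ℝ) 1 ×ˢ Set.Ioo (0:ℝ) 1 ∧
      (x, (1:ℝ)) ∉ Set.Ioo (0:ℝ) 1 ×ˢ Set.Ioo (0:ℝ) 1 := fun x => by simp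
  exact ⟨hu.1, fun y => ⟨hu.eq_zero (hx y).1, hu.eq_zero (hx y).2⟩,
    fun x => ⟨hu.eq_zero (hy x).1, hu.eq_zero (hy x).2⟩,
    fun v y => ⟨(hu.pd v).eq_zero (hx y).1, (hu.pd v).eq_zero (hx y).2⟩,
    fun v x => ⟨(hu.pd v).eq_zero (hy x).1, (hu.pd v).eq_zero (hy x).2⟩⟩

theorem integral_eq_sqInt {f : ℝ × ℝ → ℝ} (hf : ∀ p, p ∉ Rect 1 → f p = 0) :
    ∫ p, f p = sqInt f := by
  refine (setIntegral_eq_integral_of_forall_compl_eq_zero fun p hp => hf p fun h => hp ?_).symm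
  rw [Rect_one] at h
  exact ⟨Set.Ioo_subset_Icc_self h.1, Set.Ioo_subset_Icc_self h.2⟩

theorem Adm.integral_sq {u : ℝ × ℝ → ℝ} (hu : Adm (Rect 1) u) :
    ∫ p, u p ^ 2 = sqInt (fun p => u p ^ 2) :=
  integral_eq_sqInt fun p hp => by simp [hu.eq_zero hp]

theorem Adm.integral_lap_sq {u : ℝ × ℝ → ℝ} (hu : Adm (Rect 1) u) :
    ∫ p, lap u p ^ 2 = sqInt (fun p => lap u p ^ 2) :=
  integral_eq_sqInt fun p hp => by
    simp [lap, uxx, uyy, ((hu.pd _).pd _).eq_zero hp]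

theorem Adm.integral_sq_pos {Ω : Set (ℝ × ℝ)} {u : ℝ × ℝ → ℝ} (hu : Adm Ω u) (h0 : u ≠ 0) :
    0 < ∫ p, u p ^ 2 := by
  obtain ⟨p, hp⟩ := Function.ne_iff.1 h0
  exact (hu.1.continuous.pow 2).integral_pos_of_hasCompactSupport_nonneg_nonzero
    (hu.2.1.comp_left (g := fun x => x ^ 2) (by simp)) (fun p => sq_nonneg _)
    (x := p) (pow_ne_zero 2 hp)

theorem lam1_le {a : ℝ} {u : ℝ × ℝ → ℝ} (hu : Adm (Rect a) u) (h0 : u ≠ 0) :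
    lam1 a ≤ (∫ p, lap u p ^ 2) / ∫ p, u p ^ 2 := by
  refine csInf_le ⟨0, ?_⟩ ⟨u, hu, h0, rfl⟩
  rintro _ ⟨w, -, -, rfl⟩
  exact div_nonneg (integral_nonneg fun p => sq_nonneg _) (integral_nonneg fun p => sq_nonneg _)

/-- A smooth function equal to `1` on `(-∞, 1]` and to `0` on `[2, ∞)`. -/
def cutoff (r : ℝ) : ℝ := 1 - smoothTransition (r - 1)

theorem contDiff_cutoff : ContDiff ℝ (⊤ : ℕ∞) cutoff :=
  contDiff_const.sub (smoothTransition.contDiff.comp (contDiff_id.sub contDiff_const))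

theorem cutoff_of_le_one {r : ℝ} (h : r ≤ 1) : cutoff r = 1 := by
  simp [cutoff, smoothTransition.zero_of_nonpos (sub_nonpos.2 h)]

theorem cutoff_of_two_le {r : ℝ} (h : 2 ≤ r) : cutoff r = 0 := by
  simp [cutoff, smoothTransition.one_of_one_le (by linarith : 1 ≤ r - 1)]

theorem abs_cutoff_le_one (r : ℝ) : |cutoff r| ≤ 1 := by
  have h0 := smoothTransition.nonneg (r - 1)
  have h1 := smoothTransition.le_one (r - 1)
  rw [cutoff, abs_le]
  constructor <;> linarith

theorem contDiff_deriv_cutoff : ContDiff ℝ (⊤ : ℕ∞) (deriv cutoff) :=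
  (contDiff_infty_iff_deriv.1 contDiff_cutoff).2

theorem contDiff_deriv_deriv_cutoff : ContDiff ℝ (⊤ : ℕ∞) (deriv (deriv cutoff)) :=
  (contDiff_infty_iff_deriv.1 contDiff_deriv_cutoff).2

theorem tsupport_deriv_cutoff_subset : tsupport (deriv cutoff) ⊆ Set.Icc 1 2 := by
  refine closure_minimal (fun r hr => ?_) isClosed_Icc
  by_contra h
  refine hr ?_
  rw [Set.mem_Icc, not_and_or, not_le, not_le] at h
  rcases h with h | h
  · have : cutoff =ᶠ[nhds r] fun _ => 1 :=
      (eventually_lt_nhds h).mono fun x hx => cutoff_of_le_one hx.le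
    rw [this.deriv_eq, deriv_const]
  · have : cutoff =ᶠ[nhds r] fun _ => 0 :=
      (eventually_gt_nhds h).mono fun x hx => cutoff_of_two_le hx.le
    rw [this.deriv_eq, deriv_const]

theorem hasCompactSupport_deriv_cutoff : HasCompactSupport (deriv cutoff) :=
  isCompact_Icc.of_isClosed_subset isClosed_closure tsupport_deriv_cutoff_subset

theorem deriv_cutoff_of_two_lt {r : ℝ} (h : 2 < r) : deriv cutoff r = 0 :=
  image_eq_zero_of_notMem_tsupport fun hr => absurd (tsupport_deriv_cutoff_subset hr).2 (not_le.2 h)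

theorem deriv_deriv_cutoff_of_two_lt {r : ℝ} (h : 2 < r) : deriv (deriv cutoff) r = 0 := by
  by_contra hr
  exact absurd (tsupport_deriv_cutoff_subset (support_deriv_subset hr)).2 (not_le.2 h)

theorem exists_bound_mul_deriv_cutoff : ∃ C, ∀ r, |r * deriv cutoff r| ≤ C :=
  (continuous_id.mul contDiff_deriv_cutoff.continuous).bounded_above_of_compact_support
    hasCompactSupport_deriv_cutoff.mul_left

theorem exists_bound_sq_mul_deriv_deriv_cutoff : ∃ C, ∀ r, |r ^ 2 * deriv (deriv cutoff) r| ≤ C :=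
  ((continuous_id.pow 2).mul contDiff_deriv_deriv_cutoff.continuous).bounded_above_of_compact_support
    hasCompactSupport_deriv_cutoff.deriv.mul_left

/-- The power `s ^ k`, cut off near the origin at scale `1 / n`. -/
def cutPow (n : ℝ) (k : ℕ) (s : ℝ) : ℝ := (1 - cutoff (n * s)) * s ^ k

/-- The derivative of `cutPow n k`. -/
def cutPowDeriv (n : ℝ) (k : ℕ) (s : ℝ) : ℝ :=
  (1 - cutoff (n * s)) * (k * s ^ (k - 1)) - n * deriv cutoff (n * s) * s ^ k

/-- The second derivative of `cutPow n k`. -/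
def cutPowDeriv2 (n : ℝ) (k : ℕ) (s : ℝ) : ℝ :=
  (1 - cutoff (n * s)) * (k * (k - 1) * s ^ (k - 2)) -
    2 * (n * deriv cutoff (n * s)) * (k * s ^ (k - 1)) - n ^ 2 * deriv (deriv cutoff) (n * s) * s ^ k

theorem hasDerivAt_comp_const_mul {f : ℝ → ℝ} (hf : ContDiff ℝ (⊤ : ℕ∞) f) (n s : ℝ) :
    HasDerivAt (fun s => f (n * s)) (n * deriv f (n * s)) s := by
  have h := (hf.differentiable (by simp) (n * s)).hasDerivAt.comp s
    ((hasDerivAt_id s).const_mul n)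
  exact h.congr_deriv (by simp [mul_comm])

theorem hasDerivAt_cutPow (n : ℝ) (k : ℕ) (s : ℝ) :
    HasDerivAt (cutPow n k) (cutPowDeriv n k s) s := by
  have h := ((hasDerivAt_comp_const_mul contDiff_cutoff n s).const_sub 1).fun_mul (hasDerivAt_pow k s)
  exact h.congr_deriv (by rw [cutPowDeriv]; ring)

theorem hasDerivAt_cutPowDeriv (n : ℝ) (k : ℕ) (s : ℝ) :
    HasDerivAt (cutPowDeriv n k) (cutPowDeriv2 n k s) s := by
  have h := (((hasDerivAt_comp_const_mul contDiff_cutoff n s).const_sub 1).fun_mul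
    ((hasDerivAt_pow (k - 1) s).const_mul (k : ℝ))).fun_sub
    (((hasDerivAt_comp_const_mul contDiff_deriv_cutoff n s).const_mul n).fun_mul (hasDerivAt_pow k s))
  refine h.congr_deriv ?_
  rw [cutPowDeriv2]
  rcases k with _ | _ | k
  · simp
    ring
  · simp
    ring
  · simp only [Nat.add_sub_cancel, Nat.reduceSubDiff]
    push_cast
    ring

theorem contDiff_cutPow (n : ℝ) (k : ℕ) : ContDiff ℝ (⊤ : ℕ∞) (cutPow n k) :=
  (contDiff_const.sub (contDiff_cutoff.comp (contDiff_const.mul contDiff_id))).mul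
    (contDiff_id.pow k)

theorem abs_one_sub_cutoff_le (r : ℝ) : |1 - cutoff r| ≤ 2 :=
  (abs_sub _ _).trans (by have := abs_cutoff_le_one r; rw [abs_one]; linarith)

theorem exists_bound_cutPow (k : ℕ) : ∃ C, ∀ n s : ℝ, s ∈ Set.Icc (0:ℝ) 1 →
    |cutPow n (k + 2) s| ≤ C ∧ |cutPowDeriv n (k + 2) s| ≤ C ∧ |cutPowDeriv2 n (k + 2) s| ≤ C := by
  obtain ⟨C₁, h₁⟩ := exists_bound_mul_deriv_cutoff
  obtain ⟨C₂, h₂⟩ := exists_bound_sq_mul_deriv_deriv_cutoff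
  have p₁ : 0 ≤ C₁ := (abs_nonneg _).trans (h₁ 0)
  have p₂ : 0 ≤ C₂ := (abs_nonneg _).trans (h₂ 0)
  refine ⟨2 * (k + 2) * (k + 2) + 2 * (k + 2) * C₁ + C₂ + C₁, fun n s hs => ?_⟩
  have a := abs_one_sub_cutoff_le (n * s)
  have b := h₁ (n * s)
  have c := h₂ (n * s)
  have q : ∀ j : ℕ, 0 ≤ s ^ j ∧ s ^ j ≤ 1 := fun j => ⟨pow_nonneg hs.1 j, pow_le_one₀ hs.1 hs.2⟩
  have m : ∀ (x y : ℝ) (j : ℕ), |x| ≤ y → |x * s ^ j| ≤ y := fun x y j h => by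
    rw [abs_mul, abs_of_nonneg (q j).1]
    exact (mul_le_of_le_one_right (abs_nonneg _) (q j).2).trans h
  have a' : ∀ (c : ℝ) (j : ℕ), 0 ≤ c → |(1 - cutoff (n * s)) * (c * s ^ j)| ≤ 2 * c :=
    fun c j hc => by
      rw [← mul_assoc]
      refine m _ _ _ ?_
      rw [abs_mul, abs_of_nonneg hc]
      exact mul_le_mul_of_nonneg_right a hc
  have k0 : (0:ℝ) ≤ k := k.cast_nonneg
  have kC : 0 ≤ (k:ℝ) * C₁ := mul_nonneg k0 p₁
  refine ⟨?_, ?_, ?_⟩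
  · refine (m _ _ _ a).trans ?_
    nlinarith
  · have e : cutPowDeriv n (k + 2) s = (1 - cutoff (n * s)) * ((k + 2) * s ^ (k + 1)) -
        n * s * deriv cutoff (n * s) * s ^ (k + 1) := by
      rw [cutPowDeriv, show k + 2 - 1 = k + 1 from rfl]
      push_cast
      ring
    rw [e]
    refine (abs_sub _ _).trans ((add_le_add (a' _ _ (by positivity)) (m _ _ _ b)).trans ?_)
    nlinarith
  · have e : cutPowDeriv2 n (k + 2) s =
        (1 - cutoff (n * s)) * (((k + 2) * (k + 1)) * s ^ k) -
        2 * (k + 2) * (n * s * deriv cutoff (n * s) * s ^ k) -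
        (n * s) ^ 2 * deriv (deriv cutoff) (n * s) * s ^ k := by
      rw [cutPowDeriv2, show k + 2 - 1 = k + 1 from rfl, show k + 2 - 2 = k from rfl]
      push_cast
      ring
    rw [e]
    have b' : |2 * (k + 2) * (n * s * deriv cutoff (n * s) * s ^ k)| ≤ 2 * (k + 2) * C₁ := by
      rw [abs_mul, abs_of_nonneg (by positivity : (0:ℝ) ≤ 2 * (k + 2))]
      exact mul_le_mul_of_nonneg_left (m _ _ _ b) (by positivity)
    refine (abs_sub _ _).trans ((add_le_add ((abs_sub _ _).trans (add_le_add
      (a' _ _ (by positivity)) b')) (m _ _ _ c)).trans ?_)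
    nlinarith

/-- The power `par ^ k`, cut off near the end points of the unit interval. -/
def cutPar (n : ℝ) (k : ℕ) (x : ℝ) : ℝ := cutPow n k (par x)

/-- The second derivative of `cutPar n k`. -/
def cutParDeriv2 (n : ℝ) (k : ℕ) (x : ℝ) : ℝ :=
  cutPowDeriv2 n k (par x) * (4 - 8 * x) * (4 - 8 * x) + cutPowDeriv n k (par x) * -8

theorem contDiff_cutPar (n : ℝ) (k : ℕ) : ContDiff ℝ (⊤ : ℕ∞) (cutPar n k) :=
  (contDiff_cutPow n k).comp contDiff_par

theorem hasDerivAt_cutPar (n : ℝ) (k : ℕ) (x : ℝ) :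
    HasDerivAt (cutPar n k) (cutPowDeriv n k (par x) * (4 - 8 * x)) x :=
  (hasDerivAt_cutPow n k (par x)).comp x (hasDerivAt_par x)

theorem hasDerivAt_cutParDeriv (n : ℝ) (k : ℕ) (x : ℝ) :
    HasDerivAt (fun x => cutPowDeriv n k (par x) * (4 - 8 * x)) (cutParDeriv2 n k x) x := by
  have h := ((hasDerivAt_cutPowDeriv n k (par x)).comp x (hasDerivAt_par x)).fun_mul
    (((hasDerivAt_id x).const_mul 8).const_sub 4)
  exact h.congr_deriv (by simp [cutParDeriv2])

theorem exists_bound_cutPar {k : ℕ} (hk : 2 ≤ k) : ∃ C, ∀ n x : ℝ, x ∈ Set.Icc (0:ℝ) 1 →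
    |cutPar n k x| ≤ C ∧ |cutParDeriv2 n k x| ≤ C := by
  obtain ⟨k, rfl⟩ := Nat.exists_eq_add_of_le' hk
  obtain ⟨C, hC⟩ := exists_bound_cutPow k
  refine ⟨16 * C + 8 * C, fun n x hx => ?_⟩
  obtain ⟨h0, h1, h2⟩ := hC n (par x) (par_mem_Icc hx)
  have p : 0 ≤ C := (abs_nonneg _).trans h0
  have d : |4 - 8 * x| ≤ 4 := abs_le.2 ⟨by linarith [hx.2], by linarith [hx.1]⟩
  refine ⟨h0.trans (by linarith), (abs_add_le _ _).trans (add_le_add ?_ ?_)⟩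
  · rw [abs_mul, abs_mul]
    calc _ ≤ C * 4 * 4 := by gcongr
      _ = _ := by ring
  · rw [abs_mul]
    norm_num
    linarith

theorem cutPar_eq {n : ℝ} {x : ℝ} (h : 2 < n * par x) (k : ℕ) : cutPar n k x = par x ^ k := by
  simp [cutPar, cutPow, cutoff_of_two_le h.le]

theorem cutParDeriv2_eq {n : ℝ} {x : ℝ} (h : 2 < n * par x) (k : ℕ) :
    cutParDeriv2 n k x = parPowDeriv2 k x := by
  rw [cutParDeriv2, cutPowDeriv2, cutPowDeriv, cutoff_of_two_le h.le, deriv_cutoff_of_two_lt h,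
    deriv_deriv_cutoff_of_two_lt h, parPowDeriv2]
  rcases k with _ | _ | k
  · simp
  · simp
    norm_num
  · simp only [Nat.add_sub_cancel, Nat.reduceSubDiff, par]
    push_cast
    ring

theorem exists_bound_tensorSum {φ ψ : ℝ → ℕ → ℝ → ℝ}
    (hφ : ∀ k, 2 ≤ k → ∃ C, ∀ n x : ℝ, x ∈ Set.Icc (0:ℝ) 1 → |φ n k x| ≤ C)
    (hψ : ∀ k, 2 ≤ k → ∃ C, ∀ n x : ℝ, x ∈ Set.Icc (0:ℝ) 1 → |ψ n k x| ≤ C)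
    {l : List (ℕ × ℕ × ℤ)} (hl : ∀ m ∈ l, 2 ≤ m.1 ∧ 2 ≤ m.2.1) :
    ∃ C, ∀ n, ∀ p ∈ Set.Icc (0:ℝ) 1 ×ˢ Set.Icc (0:ℝ) 1, |tensorSum (φ n) (ψ n) l p| ≤ C := by
  induction l with
  | nil => exact ⟨0, fun n p _ => by simp [tensorSum_nil]⟩
  | cons m l ih =>
    obtain ⟨C, hC⟩ := ih fun m' hm' => hl m' (List.mem_cons_of_mem _ hm')
    obtain ⟨A, hA⟩ := hφ m.1 (hl m List.mem_cons_self).1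
    obtain ⟨B, hB⟩ := hψ m.2.1 (hl m List.mem_cons_self).2
    refine ⟨|(m.2.2 : ℝ)| * (A * B) + C, fun n p hp => ?_⟩
    rw [tensorSum_cons]
    refine (abs_add_le _ _).trans (add_le_add ?_ (hC n p hp))
    rw [abs_mul, abs_mul]
    have := hA n p.1 hp.1
    have := hB n p.2 hp.2
    have : 0 ≤ A := (abs_nonneg _).trans (hA n p.1 hp.1)
    gcongr

theorem tendsto_sqInt_sq {F : ℝ → ℝ × ℝ → ℝ} {f : ℝ × ℝ → ℝ} (hF : ∀ n, Continuous (F n))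
    (hb : ∃ C, ∀ n, ∀ p ∈ Set.Icc (0:ℝ) 1 ×ˢ Set.Icc (0:ℝ) 1, |F n p| ≤ C)
    (hlim : ∀ p ∈ Set.Ioo (0:ℝ) 1 ×ˢ Set.Ioo (0:ℝ) 1, ∀ᶠ n in atTop, F n p = f p) :
    Tendsto (fun n => sqInt fun p => F n p ^ 2) atTop (nhds (sqInt fun p => f p ^ 2)) := by
  obtain ⟨C, hC⟩ := hb
  have hs : (Set.Ioo (0:ℝ) 1 ×ˢ Set.Ioo (0:ℝ) 1 : Set (ℝ × ℝ)) =ᵐ[volume]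
      Set.Icc (0:ℝ) 1 ×ˢ Set.Icc (0:ℝ) 1 := by
    rw [Measure.volume_eq_prod]
    exact Measure.set_prod_ae_eq Ioo_ae_eq_Icc Ioo_ae_eq_Icc
  unfold sqInt
  simp only [← setIntegral_congr_set hs]
  have hm : MeasurableSet (Set.Ioo (0:ℝ) 1 ×ˢ Set.Ioo (0:ℝ) 1 : Set (ℝ × ℝ)) :=
    measurableSet_Ioo.prod measurableSet_Ioo
  refine tendsto_integral_filter_of_dominated_convergence (fun _ => C ^ 2)
    (.of_forall fun n => ((hF n).pow 2).aestronglyMeasurable) (.of_forall fun n => ?_) ?_ ?_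
  · filter_upwards [ae_restrict_mem hm] with p hp
    rw [norm_pow, Real.norm_eq_abs]
    have := hC n p ⟨Set.Ioo_subset_Icc_self hp.1, Set.Ioo_subset_Icc_self hp.2⟩
    gcongr
  · exact integrableOn_const (by simp [Measure.volume_eq_prod])
  · filter_upwards [ae_restrict_mem hm] with p hp
    exact tendsto_const_nhds.congr' ((hlim p hp).mono fun n hn => by simp only [hn])

theorem adm_tensorSum_cutPar {n : ℝ} (hn : 0 < n) (l : List (ℕ × ℕ × ℤ)) :
    Adm (Rect 1) (tensorSum (cutPar n) (cutPar n) l) := by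
  have cp := continuous_par
  have zero : ∀ (k : ℕ) x, ¬ 1 ≤ n * par x → cutPar n k x = 0 := fun k x h => by
    simp [cutPar, cutPow, cutoff_of_le_one (not_le.1 h).le]
  have hsub : tsupport (tensorSum (cutPar n) (cutPar n) l) ⊆
      {p | 1 ≤ n * par p.1 ∧ 1 ≤ n * par p.2} := by
    refine closure_minimal (fun p hp => ⟨?_, ?_⟩)
      ((isClosed_le continuous_const (f := fun _ : ℝ × ℝ => (1:ℝ))
        (by fun_prop : Continuous fun p : ℝ × ℝ => n * par p.1)).inter
      (isClosed_le continuous_const (by fun_prop : Continuous fun p : ℝ × ℝ => n * par p.2)))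
    · by_contra h
      exact hp (tensorSum_eq_zero_of_fst _ fun m _ => zero _ _ h)
    · by_contra h
      exact hp (tensorSum_eq_zero_of_snd _ fun m _ => zero _ _ h)
  have pos : ∀ x, 1 ≤ n * par x → x ∈ Set.Ioo (0:ℝ) 1 := fun x h =>
    par_pos_iff.1 (pos_of_mul_pos_right (zero_lt_one.trans_le h) hn.le)
  have hR : tsupport (tensorSum (cutPar n) (cutPar n) l) ⊆ Rect 1 := by
    rw [Rect_one]
    exact fun p hp => ⟨pos _ (hsub hp).1, pos _ (hsub hp).2⟩
  refine ⟨ContDiff.tensorSum (contDiff_cutPar n) (contDiff_cutPar n) l, ?_, hR⟩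
  refine (isCompact_Icc (a := (0:ℝ)) (b := 1)).prod (isCompact_Icc (a := (0:ℝ)) (b := 1))
    |>.of_isClosed_subset isClosed_closure (hR.trans ?_)
  rw [Rect_one]
  exact Set.prod_mono Set.Ioo_subset_Icc_self Set.Ioo_subset_Icc_self

theorem exists_adm_ne_zero : ∃ u, Adm (Rect 1) u ∧ u ≠ 0 := by
  refine ⟨_, adm_tensorSum_cutPar (n := 4) (by norm_num) [(0, 0, 1)], fun h => ?_⟩
  have h1 := congrFun h (2⁻¹, 2⁻¹)
  have h2 : 2 < 4 * par 2⁻¹ := by norm_num [par]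
  simp [tensorSum_cons, tensorSum_nil, cutPar_eq h2] at h1

/-- Polynomials satisfying the clamped boundary conditions bound the eigenvalue from above. -/
theorem lam1_one_le_parPoly {l : List (ℕ × ℕ × ℤ)} (hl : ∀ m ∈ l, 2 ≤ m.1 ∧ 2 ≤ m.2.1)
    (h0 : 0 < sqInt (fun p => parPoly l p ^ 2)) :
    lam1 1 ≤ sqInt (fun p => lap (parPoly l) p ^ 2) / sqInt (fun p => parPoly l p ^ 2) := by
  have b0 : ∀ k, 2 ≤ k → ∃ C, ∀ n x : ℝ, x ∈ Set.Icc (0:ℝ) 1 → |cutPar n k x| ≤ C := fun k hk =>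
    (exists_bound_cutPar hk).imp fun C h n x hx => (h n x hx).1
  have b2 : ∀ k, 2 ≤ k → ∃ C, ∀ n x : ℝ, x ∈ Set.Icc (0:ℝ) 1 → |cutParDeriv2 n k x| ≤ C :=
    fun k hk => (exists_bound_cutPar hk).imp fun C h n x hx => (h n x hx).2
  have ev : ∀ p ∈ Set.Ioo (0:ℝ) 1 ×ˢ Set.Ioo (0:ℝ) 1,
      ∀ᶠ n : ℝ in atTop, 2 < n * par p.1 ∧ 2 < n * par p.2 := fun p hp =>
    ((tendsto_id.atTop_mul_const (par_pos_iff.2 hp.1)).eventually_gt_atTop 2).and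
      ((tendsto_id.atTop_mul_const (par_pos_iff.2 hp.2)).eventually_gt_atTop 2)
  have hu : ∀ n, ContDiff ℝ (⊤ : ℕ∞) (tensorSum (cutPar n) (cutPar n) l) := fun n =>
    ContDiff.tensorSum (contDiff_cutPar n) (contDiff_cutPar n) l
  have hlap : ∀ n, lap (tensorSum (cutPar n) (cutPar n) l) = fun p =>
      tensorSum (cutParDeriv2 n) (cutPar n) l p + tensorSum (cutPar n) (cutParDeriv2 n) l p :=
    fun n => lap_tensorSum (contDiff_cutPar n) (hasDerivAt_cutPar n) (hasDerivAt_cutParDeriv n) l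
  have tN : Tendsto (fun n => sqInt fun p => tensorSum (cutPar n) (cutPar n) l p ^ 2) atTop
      (nhds (sqInt fun p => parPoly l p ^ 2)) := by
    refine tendsto_sqInt_sq (fun n => (hu n).continuous) (exists_bound_tensorSum b0 b0 hl) fun p hp => ?_
    filter_upwards [ev p hp] with n hn
    simp only [tensorSum, parPoly, cutPar_eq hn.1, cutPar_eq hn.2]
  have tE : Tendsto (fun n => sqInt fun p => lap (tensorSum (cutPar n) (cutPar n) l) p ^ 2) atTop
      (nhds (sqInt fun p => lap (parPoly l) p ^ 2)) := by
    refine tendsto_sqInt_sq (fun n => (hu n).continuous_lap) ?_ fun p hp => ?_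
    · obtain ⟨A, hA⟩ := exists_bound_tensorSum b2 b0 hl
      obtain ⟨B, hB⟩ := exists_bound_tensorSum b0 b2 hl
      refine ⟨A + B, fun n p hp => ?_⟩
      rw [hlap]
      exact (abs_add_le _ _).trans (add_le_add (hA n p hp) (hB n p hp))
    · filter_upwards [ev p hp] with n hn
      rw [hlap, lap_parPoly_eq_tensorSum]
      simp only [tensorSum, cutPar_eq hn.1, cutPar_eq hn.2, cutParDeriv2_eq hn.1,
        cutParDeriv2_eq hn.2]
  refine ge_of_tendsto (tE.div tN h0.ne') ?_
  filter_upwards [tN.eventually (eventually_gt_nhds h0), eventually_gt_atTop 0] with n hN hn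
  have ha := adm_tensorSum_cutPar hn l
  rw [← ha.integral_sq] at hN
  rw [Pi.div_apply, ← ha.integral_sq, ← ha.integral_lap_sq]
  exact lam1_le ha fun h => by simp [h] at hN

/-- Coefficients of the trial function `U` in the monomials `t(x) ^ i * t(y) ^ j`. -/
def trialCoeffs : List (ℕ × ℕ × ℤ) :=
  [(2, 2, 73719457787711736000000000), (2, 3, -578237144461279504673472000),
   (2, 4, 1497044988118843229266200000), (2, 5, -2337870841219951937571672000),
   (2, 6, 2190140660066809216502736000), (2, 7, -1128541617769506094017864000),
   (2, 8, 245374035735073909888224000), (3, 2, -578237144461279504673472000),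
   (3, 3, 3902792061743879507507304000), (3, 4, -11960635618324084708552536000),
   (3, 5, 20581861922340803287178976000), (3, 6, -20413264637746813094406144000),
   (3, 7, 10893933346561427241143064000), (3, 8, -2423018879109577048580280000),
   (4, 2, 1497044988118843229266200000), (4, 3, -11960635618324084708552536000),
   (4, 4, 40642422006736763748478944000), (4, 5, -74334393289173774071683368000),
   (4, 6, 76522349567986875601736688000), (4, 7, -41816321585054977543999416000),
   (4, 8, 9447555446902247137182720000), (5, 2, -2337870841219951937571672000),
   (5, 3, 20581861922340803287178976000), (5, 4, -74334393289173774071683368000),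
   (5, 5, 141267344243845813111270152000), (5, 6, -149048472821845992210407592000),
   (5, 7, 82780194781013493535107336000), (5, 8, -18908660898743164630000920000),
   (6, 2, 2190140660066809216502736000), (6, 3, -20413264637746813094406144000),
   (6, 4, 76522349567986875601736688000), (6, 5, -149048472821845992210407592000),
   (6, 6, 159871035928581028725441768000), (6, 7, -89790556940060031349670376000),
   (6, 8, 20668987853282872704064464000), (7, 2, -1128541617769506094017864000),
   (7, 3, 10893933346561427241143064000), (7, 4, -41816321585054977543999416000),
   (7, 5, 82780194781013493535107336000), (7, 6, -89790556940060031349670376000),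
   (7, 7, 50824610870113667564529552000), (7, 8, -11763436953375449267293368000),
   (8, 2, 245374035735073909888224000), (8, 3, -2423018879109577048580280000),
   (8, 4, 9447555446902247137182720000), (8, 5, -18908660898743164630000920000),
   (8, 6, 20668987853282872704064464000), (8, 7, -11763436953375449267293368000),
   (8, 8, 2733225197118222893846760000)]

/-- Coefficients of the Laplacian of the trial function. -/
def trialLapCoeffs : List (ℕ × ℕ × ℤ) :=
  [(0, 2, 2359022649206775552000000000), (0, 3, -18503588622760944149551104000),
   (0, 4, 47905439619802983336518400000), (0, 5, -74811866919038462002293504000),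
   (0, 6, 70084501122137894928087552000), (0, 7, -36113331768624195008571648000),
   (0, 8, 7851969143522365116423168000), (1, 2, -59049299842092995776653312000),
   (1, 3, 402423420861553848945027840000), (1, 4, -1220079178788816607025821056000),
   (1, 5, 2088076544923274808572621952000), (1, 6, -2064800156906900899455121152000),
   (1, 7, 1099987598922833307662591616000), (1, 8, -244387766109802944338341632000),
   (2, 0, 2359022649206775552000000000), (2, 1, -59049299842092995776653312000),
   (2, 2, 713642190108342881159854080000), (2, 3, -3848233832656495308321527232000),
   (2, 4, 11131522319163599926181376768000), (2, 5, -18656801177858644377718132992000),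
   (2, 6, 18183316307337924346567035072000), (2, 7, -9571564820223597910877750592000),
   (2, 8, 2104692911298380696168715840000), (3, 0, -18503588622760944149551104000),
   (3, 1, 402423420861553848945027840000), (3, 2, -3848233832656495308321527232000),
   (3, 3, 18530756387307304053226080768000), (3, 4, -50098745700205802251297341696000),
   (3, 5, 79955381192425182007558106112000), (3, 6, -74938325998198677709199529024000),
   (3, 7, 38182616488921826867727285504000), (3, 8, -8167023907703916040329223680000),
   (4, 0, 47905439619802983336518400000), (4, 1, -1220079178788816607025821056000),
   (4, 2, 11131522319163599926181376768000), (4, 3, -50098745700205802251297341696000),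
   (4, 4, 126982218753472517909279245440000), (4, 5, -190903879559324584208337477696000),
   (4, 6, 169302839255927888070906073728000), (4, 7, -81969990681419829972175832640000),
   (4, 8, 16728232093123318164751273920000), (5, 0, -74811866919038462002293504000),
   (5, 1, 2088076544923274808572621952000), (5, 2, -18656801177858644377718132992000),
   (5, 3, 79955381192425182007558106112000), (5, 4, -190903879559324584208337477696000),
   (5, 5, 268651769085551503085374676736000), (5, 6, -221957303199862823036050711104000),
   (5, 7, 99715867031861519200790700672000), (5, 8, -18818255219201658695367180288000),
   (6, 0, 70084501122137894928087552000), (6, 1, -2064800156906900899455121152000),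
   (6, 2, 18183316307337924346567035072000), (6, 3, -74938325998198677709199529024000),
   (6, 4, 169302839255927888070906073728000), (6, 5, -221957303199862823036050711104000),
   (6, 6, 167773877137810313530803586944000), (6, 7, -67382584562818710326374257024000),
   (6, 8, 11012751878675254779476268864000), (7, 0, -36113331768624195008571648000),
   (7, 1, 1099987598922833307662591616000), (7, 2, -9571564820223597910877750592000),
   (7, 3, 38182616488921826867727285504000), (7, 4, -81969990681419829972175832640000),
   (7, 5, 99715867031861519200790700672000), (7, 6, -67382584562818710326374257024000),
   (7, 7, 22585798950480862593203266560000), (7, 8, -2623896189233493978092889600000),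
   (8, 0, 7851969143522365116423168000), (8, 1, -244387766109802944338341632000),
   (8, 2, 2104692911298380696168715840000), (8, 3, -8167023907703916040329223680000),
   (8, 4, 16728232093123318164751273920000), (8, 5, -18818255219201658695367180288000),
   (8, 6, 11012751878675254779476268864000), (8, 7, -2623896189233493978092889600000)]

/-- Coefficients of a function whose Laplacian is the trial function. -/
def potentialCoeffs : List (ℕ × ℕ × ℤ) :=
  [(0, 0, -3547270958582473400017), (0, 1, 143250403075500580947384),
   (0, 2, 35812600768875145236846), (0, 3, -3995307079447351841679264),
   (0, 4, 5002594879798058176818468), (0, 5, -961737137947427103552464),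
   (0, 6, -3153369692451953855773744), (0, 7, 2010497892579165902763893),
   (0, 8, 394113683303530201322426), (0, 9, -364752211708507033854988),
   (0, 10, -65336738327155789489992), (0, 11, 12291937577507038984308),
   (0, 12, -333650939783294229708), (0, 13, -2094311780898246328650),
   (0, 14, -365143517299061521020), (0, 15, -19021394119827730631), (0, 16, -275587117301496000),
   (0, 17, -506593965627750), (1, 0, 143250403075500580947384),
   (1, 1, -4969351640983360369905556), (1, 2, 10797302229249528150416672),
   (1, 3, 5398651114624764075208336), (1, 4, -30193103529068841206423760),
   (1, 5, 26238633235732666441697016), (1, 6, 4058153421109560348502057),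
   (1, 7, -13203328153791647986338672), (1, 8, 1459575143152971971557356),
   (1, 9, 1959986365958483614828944), (1, 10, 39519091600408083236628),
   (1, 11, -90626817426453972559152), (1, 12, 25533351830125277668530),
   (1, 13, 13237010844145863094320), (1, 14, 1375809721834014952485),
   (1, 15, 42440416064430384000), (1, 16, 284199214717167750), (2, 0, 35812600768875145236846),
   (2, 1, 10797302229249528150416672), (2, 2, -42298645269403536429603880),
   (2, 3, 45985198316716869292056000), (2, 4, 28932726702603542620035000),
   (2, 5, -87691397360686555967884275), (2, 6, 35718182278954568737976152),
   (2, 7, 21653658082164247261867680), (2, 8, -10646725087340140525014312),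
   (2, 9, -3289555045813166241204324), (2, 10, 741760130026830941313672),
   (2, 11, 117677699708402418645060), (2, 12, -130551434166236596372860),
   (2, 13, -29199563291142936246555), (2, 14, -1691553725996582448000),
   (2, 15, -23493801749952534000), (3, 0, -3995307079447351841679264),
   (3, 1, 5398651114624764075208336), (3, 2, 45985198316716869292056000),
   (3, 3, -134920086528577749641284160), (3, 4, 92570470879751468723871025),
   (3, 5, 70897442212300839837189880), (3, 6, -95888848696203784595282176),
   (3, 7, 1902744081110039968560072), (3, 8, 19073677248294474578012460),
   (3, 9, 642433080251534360895568), (3, 10, -1935419910708579609814500),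
   (3, 11, 301943659999290155246400), (3, 12, 251493765050200373726025),
   (3, 13, 27252810029944939440000), (3, 14, 681320250748623486000),
   (4, 0, 5002594879798058176818468), (4, 1, -30193103529068841206423760),
   (4, 2, 28932726702603542620035000), (4, 3, 92570470879751468723871025),
   (4, 4, -188063172135710071179875880), (4, 5, 54571688730884307169622088),
   (4, 6, 83264622805180692615215466), (4, 7, -38184901037010774437171946),
   (4, 8, -13335076342622610288937818), (4, 9, 5195076123875931756713250),
   (4, 10, 1359076191329113583426100), (4, 11, -933032382627306340053675),
   (4, 12, -212571918233570527632000), (4, 13, -9197823385106417061000),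
   (5, 0, -961737137947427103552464), (5, 1, 26238633235732666441697016),
   (5, 2, -87691397360686555967884275), (5, 3, 70897442212300839837189880),
   (5, 4, 54571688730884307169622088), (5, 5, -59693862300133303225021980),
   (5, 6, -54583769540031493979329098), (5, 7, 62222383638074818057365048),
   (5, 8, -5739791306902528304479050), (5, 9, -7217381419148696770774800),
   (5, 10, 1035219121094957688354465), (5, 11, 869612392773697613040000),
   (5, 12, 66428724447990789885000), (6, 0, -3153369692451953855773744),
   (6, 1, 4058153421109560348502057), (6, 2, 35718182278954568737976152),
   (6, 3, -95888848696203784595282176), (6, 4, 83264622805180692615215466),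
   (6, 5, -54583769540031493979329098), (6, 6, 85462110378378234995427752),
   (6, 7, -79588884289522546467629100), (6, 8, 24547779242765737203445200),
   (6, 9, 2311823944480793682965025), (6, 10, -1880443892066200821360000),
   (6, 11, -277792847691597848610000), (7, 0, 2010497892579165902763893),
   (7, 1, -13203328153791647986338672), (7, 2, 21653658082164247261867680),
   (7, 3, 1902744081110039968560072), (7, 4, -38184901037010774437171946),
   (7, 5, 62222383638074818057365048), (7, 6, -79588884289522546467629100),
   (7, 7, 64823642286277470993797400), (7, 8, -24214618824371427537560475),
   (7, 9, 1880443892066200821360000), (7, 10, 705166459524825308010000),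
   (8, 0, 394113683303530201322426), (8, 1, 1459575143152971971557356),
   (8, 2, -10646725087340140525014312), (8, 3, 19073677248294474578012460),
   (8, 4, -13335076342622610288937818), (8, 5, -5739791306902528304479050),
   (8, 6, 24547779242765737203445200), (8, 7, -24214618824371427537560475),
   (8, 8, 9573947613571756816325925), (8, 9, -1116513560914306737682500),
   (9, 0, -364752211708507033854988), (9, 1, 1959986365958483614828944),
   (9, 2, -3289555045813166241204324), (9, 3, 642433080251534360895568),
   (9, 4, 5195076123875931756713250), (9, 5, -7217381419148696770774800),
   (9, 6, 2311823944480793682965025), (9, 7, 1880443892066200821360000),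
   (9, 8, -1116513560914306737682500), (10, 0, -65336738327155789489992),
   (10, 1, 39519091600408083236628), (10, 2, 741760130026830941313672),
   (10, 3, -1935419910708579609814500), (10, 4, 1359076191329113583426100),
   (10, 5, 1035219121094957688354465), (10, 6, -1880443892066200821360000),
   (10, 7, 705166459524825308010000), (11, 0, 12291937577507038984308),
   (11, 1, -90626817426453972559152), (11, 2, 117677699708402418645060),
   (11, 3, 301943659999290155246400), (11, 4, -933032382627306340053675),
   (11, 5, 869612392773697613040000), (11, 6, -277792847691597848610000),
   (12, 0, -333650939783294229708), (12, 1, 25533351830125277668530),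
   (12, 2, -130551434166236596372860), (12, 3, 251493765050200373726025),
   (12, 4, -212571918233570527632000), (12, 5, 66428724447990789885000),
   (13, 0, -2094311780898246328650), (13, 1, 13237010844145863094320),
   (13, 2, -29199563291142936246555), (13, 3, 27252810029944939440000),
   (13, 4, -9197823385106417061000), (14, 0, -365143517299061521020),
   (14, 1, 1375809721834014952485), (14, 2, -1691553725996582448000),
   (14, 3, 681320250748623486000), (15, 0, -19021394119827730631), (15, 1, 42440416064430384000),
   (15, 2, -23493801749952534000), (16, 0, -275587117301496000), (16, 1, 284199214717167750),
   (17, 0, -506593965627750)]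

/-- The moments `∫ t ^ k` for `k ≤ 34`, multiplied by a common denominator and packed into the base
`2 ^ 96` digits of a natural number. -/
def packedMoments : ℕ :=
  6785441621262675447780078621239454933261576280641951268055451066413705665377259890456920550250370052753229435301900143680292990339536367360833740304327315027228224917786781963718776802912841759747133327917243938935142119862441012899747599125784392719303252681776322754071842225890099724790765057385033021783920427755385558615543093590632037523869874348120246499384824690354434187097014952609551214382677448632415167537000421047734472631228503946310460615993846333490949396409318773118458564313738178007690324121293157823804445620084895106670506816749248097017575638855797978926128138233591931578196907143651035041003713224611027481047837774852577755837118104245444912293095363322863486168705486601555342507263427829271260387419053758815691941389874268331174474856494129231654958334274193538421012714583436314323348565015250317870127835731885334808848570101337645555067024208791974054395951532302153872111025385099392225881465296977298427670620247469900048383702202769898100779687507545407100528970850295004675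

/-- The multiple of the moment `∫ t ^ k` by the common denominator, for `k ≤ 34`. -/
def scaledMoment (k : ℕ) : ℕ := Nat.mod (Nat.shiftRight packedMoments (Nat.mul 96 k)) (Nat.pow 2 96)

/-- The integral over the unit square of the product of two polynomials in `t(x)` and `t(y)`,
multiplied by the square of the common denominator of the moments. -/
def pairing (l l' : List (ℕ × ℕ × ℤ)) : ℤ :=
  (l.map fun m => m.2.2 * (l'.map fun m' => m'.2.2 *
    Int.ofNat (Nat.mul (scaledMoment (m.1 + m'.1)) (scaledMoment (m.2.1 + m'.2.1)))).sum).sum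

/-- Whether all exponents are at most `17`. -/
def lowDegree (l : List (ℕ × ℕ × ℤ)) : Bool := l.all fun m => Nat.ble m.1 17 && Nat.ble m.2.1 17

theorem scaledMoment_zero_pos : 0 < scaledMoment 0 := by decide +kernel

theorem scaledMoment_succ : ∀ k < 34,
    (2 * k + 3) * scaledMoment (k + 1) = (2 * k + 2) * scaledMoment k := by
  decide +kernel

theorem parMoment_eq {k : ℕ} (hk : k ≤ 34) : scaledMoment 0 * parMoment k = scaledMoment k := by
  induction k with
  | zero => rw [parMoment_zero, mul_one]
  | succ k ih =>
    have h1 := parMoment_succ k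
    have h2 : ((2 * k + 3 : ℝ)) * scaledMoment (k + 1) = (2 * k + 2) * scaledMoment k := by
      exact_mod_cast scaledMoment_succ k hk
    have h3 := ih (by omega)
    have h4 : (2 * k + 3 : ℝ) ≠ 0 := by positivity
    refine mul_left_cancel₀ h4 ?_
    rw [h2, ← h3]
    linear_combination (scaledMoment 0 : ℝ) * h1

theorem sqInt_parPoly_mul_eq_pairing {l l' : List (ℕ × ℕ × ℤ)} (hl : lowDegree l = true)
    (hl' : lowDegree l' = true) :
    (scaledMoment 0 : ℝ) ^ 2 * sqInt (fun p => parPoly l p * parPoly l' p) = pairing l l' := by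
  have deg : ∀ l, lowDegree l = true → ∀ m ∈ l, m.1 ≤ 17 ∧ m.2.1 ≤ 17 := fun l h m hm => by
    have := List.all_eq_true.1 h m hm
    rw [Bool.and_eq_true] at this
    exact ⟨Nat.le_of_ble_eq_true this.1, Nat.le_of_ble_eq_true this.2⟩
  rw [sqInt_parPoly_mul, ← List.sum_map_mul_left, pairing, Int.cast_list_sum, List.map_map]
  congr 1
  refine List.map_congr_left fun m hm => ?_
  rw [Function.comp_apply, Int.cast_mul, Int.cast_list_sum, List.map_map, mul_left_comm,
    ← List.sum_map_mul_left]
  congr 2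
  refine List.map_congr_left fun m' hm' => ?_
  have d := deg l hl m hm
  have d' := deg l' hl' m' hm'
  rw [Function.comp_apply, Int.cast_mul, mul_left_comm]
  congr 1
  have e : (Int.ofNat (Nat.mul (scaledMoment (m.1 + m'.1)) (scaledMoment (m.2.1 + m'.2.1))) : ℝ) =
      scaledMoment (m.1 + m'.1) * scaledMoment (m.2.1 + m'.2.1) :=
    (Int.cast_natCast _).trans (Nat.cast_mul _ _)
  rw [e, ← parMoment_eq (by omega : m.1 + m'.1 ≤ 34), ← parMoment_eq (by omega : m.2.1 + m'.2.1 ≤ 34)]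
  ring

theorem lap_trial : lap (parPoly trialCoeffs) = parPoly trialLapCoeffs :=
  lap_parPoly_of_cancels (by decide +kernel)

theorem lap_potential : lap (parPoly potentialCoeffs) = parPoly trialCoeffs :=
  lap_parPoly_of_cancels (by decide +kernel)

theorem two_le_trialCoeffs : ∀ m ∈ trialCoeffs, 2 ≤ m.1 ∧ 2 ≤ m.2.1 := by decide +kernel

theorem pairing_trial_pos : 0 < pairing trialCoeffs trialCoeffs := by decide +kernel

theorem pairing_upper : 1000000 * pairing trialLapCoeffs trialLapCoeffs <
    1294933988 * pairing trialCoeffs trialCoeffs := by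
  decide +kernel

theorem pairing_lower :
    129493394 * (1558 * pairing potentialCoeffs potentialCoeffs - pairing trialCoeffs trialCoeffs) ≤
      100000 * (1558 * pairing trialCoeffs trialCoeffs - pairing trialLapCoeffs trialLapCoeffs) := by
  decide +kernel

theorem scaled_sqInt_sq {l : List (ℕ × ℕ × ℤ)} (hl : lowDegree l = true) :
    (scaledMoment 0 : ℝ) ^ 2 * sqInt (fun p => parPoly l p ^ 2) = pairing l l := by
  rw [← sqInt_parPoly_mul_eq_pairing hl hl]
  simp only [sq]

theorem scaled_trial : (scaledMoment 0 : ℝ) ^ 2 * sqInt (fun p => parPoly trialCoeffs p ^ 2) =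
    pairing trialCoeffs trialCoeffs :=
  scaled_sqInt_sq (by decide +kernel)

theorem scaled_lap_trial :
    (scaledMoment 0 : ℝ) ^ 2 * sqInt (fun p => lap (parPoly trialCoeffs) p ^ 2) =
      pairing trialLapCoeffs trialLapCoeffs := by
  rw [lap_trial]
  exact scaled_sqInt_sq (by decide +kernel)

theorem scaled_potential :
    (scaledMoment 0 : ℝ) ^ 2 * sqInt (fun p => parPoly potentialCoeffs p ^ 2) =
      pairing potentialCoeffs potentialCoeffs :=
  scaled_sqInt_sq (by decide +kernel)

theorem scaledMoment_sq_pos : (0 : ℝ) < (scaledMoment 0 : ℝ) ^ 2 :=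
  pow_pos (Nat.cast_pos.2 scaledMoment_zero_pos) 2

theorem sqInt_trial_pos : 0 < sqInt (fun p => parPoly trialCoeffs p ^ 2) := by
  refine pos_of_mul_pos_right ?_ scaledMoment_sq_pos.le
  rw [scaled_trial]
  exact_mod_cast pairing_trial_pos

theorem sqInt_lap_trial_lt : sqInt (fun p => lap (parPoly trialCoeffs) p ^ 2) <
    1294.933988 * sqInt (fun p => parPoly trialCoeffs p ^ 2) := by
  refine lt_of_mul_lt_mul_left ?_ scaledMoment_sq_pos.le
  rw [scaled_lap_trial, mul_left_comm, scaled_trial]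
  have h : (1000000 : ℝ) * pairing trialLapCoeffs trialLapCoeffs <
    1294933988 * pairing trialCoeffs trialCoeffs := by exact_mod_cast pairing_upper
  linarith

theorem sqInt_lower : 1294.93394 * (1558 * sqInt (fun p => parPoly potentialCoeffs p ^ 2) -
      sqInt (fun p => parPoly trialCoeffs p ^ 2)) ≤
    1558 * sqInt (fun p => parPoly trialCoeffs p ^ 2) -
      sqInt (fun p => lap (parPoly trialCoeffs) p ^ 2) := by
  refine le_of_mul_le_mul_left ?_ scaledMoment_sq_pos
  have h : 129493394 * (1558 * (pairing potentialCoeffs potentialCoeffs : ℝ) -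
      pairing trialCoeffs trialCoeffs) ≤ 100000 * (1558 * (pairing trialCoeffs trialCoeffs : ℝ) -
        pairing trialLapCoeffs trialLapCoeffs) := by exact_mod_cast pairing_lower
  rw [← scaled_trial, ← scaled_lap_trial, ← scaled_potential] at h
  linarith

theorem le_sixteen_mul_pi_pow : 1558 ≤ 16 * π ^ 4 := by
  have h : (3.1415 : ℝ) ^ 4 ≤ π ^ 4 := pow_le_pow_left₀ (by norm_num) pi_gt_d4.le 4
  norm_num at h
  linarith

/-- The first Dirichlet biharmonic eigenvalue of the unit square satisfies
`1294.933940 ≤ λ₁(1) ≤ 1294.933988`. -/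
theorem first_eigenvalue_unit_square_bounds :
    1294.933940 ≤ lam1 1 ∧ lam1 1 ≤ 1294.933988 := by
  constructor
  · refine le_csInf ?_ ?_
    · obtain ⟨u, hu, h0⟩ := exists_adm_ne_zero
      exact ⟨_, u, hu, h0, rfl⟩
    · rintro _ ⟨u, hu, h0, rfl⟩
      rw [le_div_iff₀ (hu.integral_sq_pos h0), hu.integral_sq, hu.integral_lap_sq]
      refine (clamped_parPoly two_le_trialCoeffs).lehmann_bound (contDiff_parPoly potentialCoeffs)
        lap_potential (by norm_num) (by norm_num) le_sixteen_mul_pi_pow ?_ ?_ hu.clamped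
      · linarith [sqInt_lap_trial_lt, sqInt_trial_pos]
      · linarith [sqInt_lower]
  · refine (lam1_one_le_parPoly two_le_trialCoeffs sqInt_trial_pos).trans ?_
    exact (div_le_iff₀ sqInt_trial_pos).2 sqInt_lap_trial_lt.le
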